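/- arXiv:2302.03363 — 5 statements merged into one kernel-verified Lean document; each statement's English description precedes it below -/
import Mathlib

section
/- Let X : (0,∞) → Ω → ℝ be a stochastic process on a probability space (Ω, F, P) such that: (i) almost surely the path t ↦ X_t(ω) is continuous on (0,∞); (ii) for every n ∈ ℕ, all times t₁,…,tₙ ∈ (0,∞) and all reals c₁,…,cₙ, the random variable ∑ᵢ cᵢ X_{tᵢ} has a centered Gaussian distribution; (iii) X is self-similar with exponent ρ ∈ ℝ, i.e. for every a > 0 the finite-dimensional distributions of (X_{at})_{t>0} coincide with those of (a^ρ X_t)_{t>0}; (iv) E[X₁²] = σ² with σ > 0. Then almost surely limsup_{t→+∞} |X_t| / (t^ρ √(2 log log t)) ≤ σ, and almost surely sup_{t ≥ 3} |X_t| / (t^ρ √(log log t)) < ∞. -/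
open MeasureTheory ProbabilityTheory Filter

/-!
The Lamperti transform `Y s = exp (-ρ s) X (exp s)` turns `X` into a stationary centered Gaussian
process with continuous paths, for which `|X t| / t ^ ρ = |Y (log t)|`. So it suffices to compare
`|Y s|` with `√(2 log s)`. On a short block `[s, s + h]`, write `Y` as its value at the left
endpoint plus an increment. As `h → 0` the supremum of the increments tends to zero in probability,
and Fernique's theorem turns this into Gaussian tails of arbitrarily small scale. Hence for every
`τ > σ` the supremum of `|Y|` over a block of some fixed length `h`, which by stationarity does not
depend on the block, exceeds `u` with probability at most `C exp (-u² / (2τ²))`. For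
`u = M √(2 log (k h))` this is `O(k ^ (-(M / τ) ^ 2))`, summable in `k` once `M > τ`, and
Borel–Cantelli concludes.
-/

open Set Topology
open scoped ENNReal NNReal Real

theorem bddAbove_image_Ici_of_continuousOn_of_eventually_le {α β : Type*} [LinearOrder α]
    [TopologicalSpace α] [CompactIccSpace α] [LinearOrder β] [TopologicalSpace β]
    [ClosedIciTopology β] {f : α → β} {a : α} {C : β} (hf : ContinuousOn f (Ici a))
    (hC : ∀ᶠ x in atTop, f x ≤ C) : BddAbove (f '' Ici a) := by
  have : Nonempty α := ⟨a⟩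
  have : Nonempty β := ⟨f a⟩
  obtain ⟨b, hb⟩ := eventually_atTop.1 hC
  have hinit : BddAbove (f '' Icc a b) := isCompact_Icc.bddAbove_image (hf.mono Icc_subset_Ici_self)
  have htail : BddAbove (f '' Ici b) := ⟨C, forall_mem_image.2 hb⟩
  refine (hinit.union htail).mono ?_
  rw [← image_union]
  exact image_mono fun x hx => (le_total x b).imp (⟨hx, ·⟩) id

theorem eventually_atTop_of_eventually_forall_mem_Icc {h : ℝ} (hh : 0 < h) {p : ℝ → Prop}
    (hp : ∀ᶠ k : ℕ in atTop, ∀ t ∈ Icc (k * h) (k * h + h), p t) : ∀ᶠ t in atTop, p t := by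
  have hfloor : Tendsto (fun t : ℝ => ⌊t / h⌋₊) atTop atTop :=
    tendsto_nat_floor_atTop.comp (tendsto_id.atTop_div_const hh)
  filter_upwards [hfloor.eventually hp, eventually_ge_atTop 0] with t ht ht0
  refine ht t ⟨(le_div_iff₀ hh).1 (Nat.floor_le (by positivity)), ?_⟩
  have : t < (⌊t / h⌋₊ + 1) * h := (div_lt_iff₀ hh).1 (Nat.lt_floor_add_one _)
  linarith

theorem exp_neg_sq_mul_sqrt_two_log_div_le {x : ℝ} (hx : 0 < x) (M τ : ℝ) :
    Real.exp (-(M * √(2 * Real.log x)) ^ 2 / (2 * τ ^ 2)) ≤ x ^ (-(M / τ) ^ 2) := by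
  have hsq : 2 * Real.log x ≤ √(2 * Real.log x) ^ 2 := Real.sq_sqrt'.symm ▸ le_max_left _ _
  rw [Real.rpow_def_of_pos hx]
  gcongr
  calc -(M * √(2 * Real.log x)) ^ 2 / (2 * τ ^ 2)
      = -((M / τ) ^ 2 / 2 * √(2 * Real.log x) ^ 2) := by ring
    _ ≤ -((M / τ) ^ 2 / 2 * (2 * Real.log x)) := by gcongr
    _ = Real.log x * -(M / τ) ^ 2 := by ring

section GaussianTails

variable {Ω : Type*} {mΩ : MeasurableSpace Ω} {P : Measure Ω}

theorem hasSubgaussianMGF_of_hasGaussianLaw {X : Ω → ℝ} (hX : HasGaussianLaw X P)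
    (hX0 : P[X] = 0) {c : ℝ≥0} (hc : Var[X; P] ≤ c) : HasSubgaussianMGF X c P where
  integrable_exp_mul t := by
    have := integrable_exp_mul_gaussianReal (μ := P[X]) (v := Var[X; P].toNNReal) t
    rw [← hX.map_eq_gaussianReal] at this
    exact this.comp_aemeasurable hX.aemeasurable
  mgf_le t := by
    rw [mgf_gaussianReal hX.map_eq_gaussianReal, hX0, zero_mul, zero_add,
      Real.coe_toNNReal _ (variance_nonneg X P)]
    gcongr

theorem measure_lt_abs_le_of_hasSubgaussianMGF [IsFiniteMeasure P] {X : Ω → ℝ} {c : ℝ≥0}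
    (hX : HasSubgaussianMGF X c P) {u : ℝ} (hu : 0 ≤ u) :
    P {ω | u < |X ω|} ≤ 2 * ENNReal.ofReal (Real.exp (-u ^ 2 / (2 * c))) := by
  have one_sided {Y : Ω → ℝ} (hY : HasSubgaussianMGF Y c P) :
      P {ω | u ≤ Y ω} ≤ ENNReal.ofReal (Real.exp (-u ^ 2 / (2 * c))) := by
    rw [← ofReal_measureReal]
    exact ENNReal.ofReal_le_ofReal (hY.measure_ge_le hu)
  calc P {ω | u < |X ω|}
      ≤ P ({ω | u ≤ X ω} ∪ {ω | u ≤ (-X) ω}) :=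
        measure_mono fun ω hω => (lt_abs.1 hω).imp (fun h => h.le) fun h : u < -X ω => h.le
    _ ≤ _ := (measure_union_le _ _).trans (add_le_add (one_sided hX) (one_sided hX.neg))
    _ = _ := (two_mul _).symm

/-- The constant in the Fernique tail bound for a centered Gaussian measure that gives mass at
least `c` to a centered ball; it does not depend on the radius of the ball. Finite for
`1 / 2 < c < 1`. -/
noncomputable def ferniqueConst (c : ℝ≥0∞) : ℝ≥0∞ :=
  .ofReal (Real.exp (Fernique.logRatio c)) +
    ∑' n : ℕ, .ofReal (Real.exp (-2⁻¹ * Real.log (c / (1 - c)).toReal * 2 ^ n))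

theorem ferniqueConst_ne_top {c : ℝ≥0∞} (hc : 2⁻¹ < c) (hc1 : c < 1) : ferniqueConst c ≠ ∞ := by
  have hsub : 1 - c < c := by
    refine ENNReal.sub_lt_of_lt_add hc1.le ?_
    simpa only [ENNReal.inv_two_add_inv_two] using ENNReal.add_lt_add hc hc
  have hratio : 1 < (c / (1 - c)).toReal := by
    have hpos : 0 < (1 - c).toReal := ENNReal.toReal_pos (tsub_pos_of_lt hc1).ne' (by finiteness)
    rw [ENNReal.toReal_div, one_lt_div hpos]
    exact (ENNReal.toReal_lt_toReal (by finiteness) (hc1.trans ENNReal.one_lt_top).ne).2 hsub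
  refine ENNReal.add_ne_top.2 ⟨ENNReal.ofReal_ne_top, Summable.tsum_ofReal_ne_top ?_⟩
  refine Real.summable_exp_nat_mul_of_ge ?_ fun n => mod_cast Nat.lt_two_pow_self.le
  exact mul_neg_of_neg_of_pos (by norm_num) (Real.log_pos hratio)

theorem measure_lt_norm_le_of_map_rotation_eq_self {E : Type*} [NormedAddCommGroup E]
    [NormedSpace ℝ E] [MeasurableSpace E] [BorelSpace E] [SecondCountableTopology E]
    {μ : Measure E} [IsProbabilityMeasure μ]
    (hμ : (μ.prod μ).map (ContinuousLinearMap.rotation (-(π / 4))) = μ.prod μ)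
    {c : ℝ≥0∞} (hc : 2⁻¹ < c) {a : ℝ} (ha : c ≤ μ {x | ‖x‖ ≤ a}) {u : ℝ} (hu : 0 ≤ u) :
    μ {x | u < ‖x‖} ≤
      ferniqueConst c * ENNReal.ofReal (Real.exp (-(Fernique.logRatio c * (u / a) ^ 2))) := by
  have hκ : 0 ≤ Fernique.logRatio c :=
    Fernique.logRatio_nonneg hc.le (ha.trans prob_le_one)
  have hmono : ∀ x : E, u < ‖x‖ →
      Fernique.logRatio c * (u / a) ^ 2 ≤ Fernique.logRatio c * a⁻¹ ^ 2 * ‖x‖ ^ 2 := fun x hx => by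
    rw [mul_assoc, ← mul_pow, inv_mul_eq_div, div_pow, div_pow]
    gcongr
  calc μ {x | u < ‖x‖}
      ≤ μ {x | ENNReal.ofReal (Real.exp (Fernique.logRatio c * (u / a) ^ 2)) ≤
          ENNReal.ofReal (Real.exp (Fernique.logRatio c * a⁻¹ ^ 2 * ‖x‖ ^ 2))} :=
        measure_mono fun x hx => ENNReal.ofReal_le_ofReal (Real.exp_le_exp.2 (hmono x hx))
    _ ≤ (∫⁻ x, ENNReal.ofReal (Real.exp (Fernique.logRatio c * a⁻¹ ^ 2 * ‖x‖ ^ 2)) ∂μ) /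
          ENNReal.ofReal (Real.exp (Fernique.logRatio c * (u / a) ^ 2)) :=
        meas_ge_le_lintegral_div (by fun_prop) (ENNReal.ofReal_pos.2 (Real.exp_pos _)).ne'
          ENNReal.ofReal_ne_top
    _ ≤ ferniqueConst c / ENNReal.ofReal (Real.exp (Fernique.logRatio c * (u / a) ^ 2)) := by
        gcongr
        exact lintegral_exp_mul_sq_norm_le_of_map_rotation_eq_self hμ ha hc
    _ = _ := by
        rw [Real.exp_neg, ENNReal.ofReal_inv_of_pos (Real.exp_pos _), div_eq_mul_inv]

end GaussianTails

section ContinuousPaths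

variable {Ω T E : Type*} {mΩ : MeasurableSpace Ω} {P : Measure Ω} [TopologicalSpace T]
  [SeminormedAddCommGroup E] {X : T → Ω → E}

theorem measure_exists_mem_lt_norm_le_of_finset {S : Set T} [TopologicalSpace.SeparableSpace S]
    (hX : ∀ᵐ ω ∂P, ContinuousOn (X · ω) S) {u : ℝ} {B : ℝ≥0∞}
    (hB : ∀ F : Finset T, ↑F ⊆ S → P {ω | ∃ t ∈ F, u < ‖X t ω‖} ≤ B) :
    P {ω | ∃ t ∈ S, u < ‖X t ω‖} ≤ B := by
  classical
  obtain ⟨D, hD, hDdense⟩ := TopologicalSpace.exists_countable_dense S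
  have : Countable D := hD
  let A (F : Finset D) : Set Ω := {ω | ∃ t ∈ F, u < ‖X t ω‖}
  have hA : Monotone A := fun F G hFG ω ⟨t, ht, hu⟩ => ⟨t, hFG ht, hu⟩
  calc P {ω | ∃ t ∈ S, u < ‖X t ω‖} ≤ P (⋃ F, A F) := by
        refine measure_mono_ae ?_
        filter_upwards [hX] with ω hω
        rintro ⟨t, ht, hu⟩
        have hopen : IsOpen {s : S | u < ‖X s ω‖} :=
          isOpen_lt continuous_const hω.domRestrict.norm
        obtain ⟨s, hsu, hsD⟩ := hDdense.exists_mem_open hopen ⟨⟨t, ht⟩, hu⟩ |>.imp fun _ h => h.symm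
        exact mem_iUnion.2 ⟨{⟨s, hsD⟩}, ⟨s, hsD⟩, Finset.mem_singleton_self _, hsu⟩
    _ = ⨆ F, P (A F) := hA.directed_le.measure_iUnion
    _ ≤ B := iSup_le fun F => by
        refine (measure_mono ?_).trans (hB (F.image fun t : D => ((t : S) : T)) ?_)
        · rintro ω ⟨t, ht, hu⟩
          exact ⟨t, Finset.mem_image_of_mem _ ht, hu⟩
        · intro t ht
          obtain ⟨s, -, rfl⟩ := Finset.mem_image.1 ht
          exact s.1.2

theorem exists_mem_nhds_le_measure_norm_sub_le {t₀ : T} [(𝓝 t₀).IsCountablyGenerated]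
    (hX : ∀ᵐ ω ∂P, ContinuousAt (X · ω) t₀) {a : ℝ} (ha : 0 < a) {c : ℝ≥0∞} (hc : c < P univ) :
    ∃ U ∈ 𝓝 t₀, c ≤ P {ω | ∀ t ∈ U, ‖X t ω - X t₀ ω‖ ≤ a} := by
  obtain ⟨U, hU⟩ := (𝓝 t₀).exists_antitone_basis
  let A (n : ℕ) : Set Ω := {ω | ∀ t ∈ U n, ‖X t ω - X t₀ ω‖ ≤ a}
  have hA : Monotone A := fun m n hmn ω hω t ht => hω t (hU.antitone hmn ht)
  have hunion : ∀ᵐ ω ∂P, ω ∈ ⋃ n, A n := by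
    filter_upwards [hX] with ω hω
    have hnear : ∀ᶠ t in 𝓝 t₀, ‖X t ω - X t₀ ω‖ ≤ a :=
      (Metric.continuousAt_iff'.1 hω a ha).mono fun t ht => (dist_eq_norm (X t ω) _ ▸ ht).le
    obtain ⟨n, -, hn⟩ := hU.toHasBasis.mem_iff.1 hnear
    exact mem_iUnion.2 ⟨n, hn⟩
  have hfull : P (⋃ n, A n) = P univ := measure_congr (eventuallyEq_univ.2 hunion)
  rw [← hfull, hA.measure_iUnion] at hc
  obtain ⟨n, hn⟩ := lt_iSup_iff.1 hc
  exact ⟨U n, hU.mem n, hn.le⟩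

end ContinuousPaths

/-- The process `X` is Gaussian and each `X t` has mean zero. -/
structure IsCenteredGaussianProcess {Ω T E : Type*} [MeasurableSpace Ω]
    [NormedAddCommGroup E] [NormedSpace ℝ E] [MeasurableSpace E] (X : T → Ω → E)
    (P : Measure Ω) : Prop where
  isGaussianProcess : IsGaussianProcess X P
  integral_eq_zero : ∀ t, P[X t] = 0

namespace IsCenteredGaussianProcess

section Vector

variable {Ω T E : Type*} {mΩ : MeasurableSpace Ω} {P : Measure Ω} [NormedAddCommGroup E]
  [NormedSpace ℝ E] [MeasurableSpace E] [BorelSpace E] [SecondCountableTopology E]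
  [CompleteSpace E] {X : T → Ω → E}

theorem sub_const (hX : IsCenteredGaussianProcess X P) (t₀ : T) :
    IsCenteredGaussianProcess (fun t ω => X t ω - X t₀ ω) P where
  isGaussianProcess := by
    classical
    exact hX.isGaussianProcess.of_isGaussianProcess fun t => ⟨{t₀, t},
      .proj (R := ℝ) (φ := fun _ => E) ⟨t, by simp⟩ - .proj ⟨t₀, by simp⟩, fun ω => rfl⟩
  integral_eq_zero t := by
    rw [integral_sub (hX.isGaussianProcess.hasGaussianLaw_eval t).integrable
      (hX.isGaussianProcess.hasGaussianLaw_eval t₀).integrable, hX.integral_eq_zero,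
      hX.integral_eq_zero, sub_zero]

theorem measure_exists_mem_lt_norm_le (hX : IsCenteredGaussianProcess X P) (F : Finset T)
    {c : ℝ≥0∞} (hc : 2⁻¹ < c) {a : ℝ} (ha0 : 0 ≤ a) (ha : c ≤ P {ω | ∀ t ∈ F, ‖X t ω‖ ≤ a})
    {u : ℝ} (hu : 0 ≤ u) :
    P {ω | ∃ t ∈ F, u < ‖X t ω‖} ≤
      ferniqueConst c * ENNReal.ofReal (Real.exp (-(Fernique.logRatio c * (u / a) ^ 2))) := by
  have hlaw := hX.isGaussianProcess.hasGaussianLaw F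
  have := hX.isGaussianProcess.isProbabilityMeasure
  let Z (ω : Ω) : F → E := F.restrict (X · ω)
  have hZ : AEMeasurable Z P := hlaw.aemeasurable
  have : IsGaussian (P.map Z) := hlaw.isGaussian_map
  have hmean : (P.map Z)[id] = 0 := by
    rw [integral_map hZ aestronglyMeasurable_id]
    ext t
    exact (eval_integral (fun t : F => (hX.isGaussianProcess.hasGaussianLaw_eval t).integrable)
      t).trans (hX.integral_eq_zero t)
  have hball : c ≤ P.map Z {x | ‖x‖ ≤ a} := by
    rw [Measure.map_apply_of_aemeasurable hZ (measurableSet_le measurable_norm measurable_const)]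
    refine ha.trans (measure_mono fun ω hω => ?_)
    exact (pi_norm_le_iff_of_nonneg ha0).2 fun t => hω t t.2
  calc P {ω | ∃ t ∈ F, u < ‖X t ω‖} ≤ P (Z ⁻¹' {x | u < ‖x‖}) :=
        measure_mono fun ω ⟨t, ht, hut⟩ => hut.trans_le (norm_le_pi_norm (Z ω) ⟨t, ht⟩)
    _ ≤ P.map Z {x | u < ‖x‖} := Measure.le_map_apply hZ _
    _ ≤ _ := measure_lt_norm_le_of_map_rotation_eq_self
        (IsGaussian.map_rotation_eq_self hmean _) hc hball hu

theorem exists_mem_nhds_measure_exists_mem_lt_norm_sub_le [TopologicalSpace T]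
    (hX : IsCenteredGaussianProcess X P) {t₀ : T} [(𝓝 t₀).IsCountablyGenerated]
    (hcont : ∀ᵐ ω ∂P, ContinuousAt (X · ω) t₀) {b : ℝ} (hb : 0 < b) :
    ∃ U ∈ 𝓝 t₀, ∃ C ≠ ∞, ∀ F : Finset T, ↑F ⊆ U → ∀ u ≥ 0,
      P {ω | ∃ t ∈ F, u < ‖X t ω - X t₀ ω‖} ≤ C * ENNReal.ofReal (Real.exp (-(u / b) ^ 2)) := by
  have := hX.isGaussianProcess.isProbabilityMeasure
  obtain ⟨c, hc, hc1⟩ := exists_between ENNReal.one_half_lt_one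
  have hκ : 0 < Fernique.logRatio c := Fernique.logRatio_pos hc hc1
  have ha : 0 < b * √(Fernique.logRatio c) := by positivity
  obtain ⟨U, hU, hUc⟩ :=
    exists_mem_nhds_le_measure_norm_sub_le hcont ha (hc1.trans_eq measure_univ.symm)
  refine ⟨U, hU, ferniqueConst c, ferniqueConst_ne_top hc hc1, fun F hF u hu => ?_⟩
  have hFc : c ≤ P {ω | ∀ t ∈ F, ‖X t ω - X t₀ ω‖ ≤ b * √(Fernique.logRatio c)} :=
    hUc.trans (measure_mono fun ω hω t ht => hω t (hF ht))
  have hexp : Fernique.logRatio c * (u / (b * √(Fernique.logRatio c))) ^ 2 = (u / b) ^ 2 := by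
    rw [div_pow, mul_pow, Real.sq_sqrt hκ.le]
    field_simp
  simpa only [hexp] using (hX.sub_const t₀).measure_exists_mem_lt_norm_le F hc ha.le hFc hu

end Vector

section Real

variable {Ω T : Type*} {mΩ : MeasurableSpace Ω} {P : Measure Ω} {X : T → Ω → ℝ}

theorem of_forall_map_sum_eq_gaussianReal (hX : ∀ t, AEMeasurable (X t) P)
    (h : ∀ (n : ℕ) (t : Fin n → T) (c : Fin n → ℝ),
      ∃ v : ℝ≥0, P.map (fun ω => ∑ i, c i * X (t i) ω) = gaussianReal 0 v) :
    IsCenteredGaussianProcess X P where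
  isGaussianProcess := ⟨fun I => ⟨isGaussian_of_map_eq_gaussianReal fun L => by
    classical
    have hI : AEMeasurable (fun ω => I.restrict (X · ω)) P := aemeasurable_pi_lambda _ fun t => hX t
    obtain ⟨v, hv⟩ := h _ (fun i => I.equivFin.symm i)
      fun i => L fun j => if I.equivFin.symm i = j then 1 else 0
    refine ⟨0, v, ?_⟩
    rw [AEMeasurable.map_map_of_aemeasurable (by fun_prop) hI, ← hv]
    congr 1 with ω
    refine ((L : (I → ℝ) →ₗ[ℝ] ℝ).pi_apply_eq_sum_univ _).trans ?_
    rw [← Equiv.sum_comp I.equivFin.symm]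
    exact Finset.sum_congr rfl fun i _ => mul_comm _ _⟩⟩
  integral_eq_zero t := by
    obtain ⟨v, hv⟩ := h 1 (fun _ => t) fun _ => 1
    simp only [Finset.univ_unique, Finset.sum_const, Finset.card_singleton, one_smul, one_mul] at hv
    calc P[X t] = ∫ x, x ∂P.map (X t) := (integral_map (hX t) aestronglyMeasurable_id).symm
      _ = 0 := hv ▸ integral_id_gaussianReal

theorem exists_mem_nhds_measure_exists_mem_lt_abs_le [TopologicalSpace T]
    (hX : IsCenteredGaussianProcess X P) {t₀ : T} [(𝓝 t₀).IsCountablyGenerated]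
    (hcont : ∀ᵐ ω ∂P, ContinuousAt (X · ω) t₀) {τ : ℝ} (hτ : √Var[X t₀; P] < τ) :
    ∃ U ∈ 𝓝 t₀, ∃ C ≠ ∞, ∀ F : Finset T, ↑F ⊆ U → ∀ u ≥ 0,
      P {ω | ∃ t ∈ F, u < |X t ω|} ≤ C * ENNReal.ofReal (Real.exp (-u ^ 2 / (2 * τ ^ 2))) := by
  have := hX.isGaussianProcess.isProbabilityMeasure
  have hτ0 : 0 < τ := (Real.sqrt_nonneg _).trans_lt hτ
  -- Allotting the share `θ u` of the level `u` to `X t₀` and `(1 - θ) u` to the increments, whose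
  -- scale is free, makes both tails decay like `exp (-u ^ 2 / (2 * τ ^ 2))`.
  obtain ⟨θ, hθ, hθ1⟩ := exists_between ((div_lt_one hτ0).2 hτ)
  have hθ0 : 0 < θ := (by positivity : 0 ≤ √Var[X t₀; P] / τ).trans_lt hθ
  have hsub : HasSubgaussianMGF (X t₀) (⟨θ * τ, by positivity⟩ ^ 2) P :=
    hasSubgaussianMGF_of_hasGaussianLaw (hX.isGaussianProcess.hasGaussianLaw_eval t₀)
      (hX.integral_eq_zero t₀) (Real.sqrt_le_iff.1 ((div_lt_iff₀ hτ0).1 hθ).le).2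
  have : 0 < 1 - θ := sub_pos.2 hθ1
  obtain ⟨U, hU, C, hC, hincr⟩ := hX.exists_mem_nhds_measure_exists_mem_lt_norm_sub_le hcont
    (by positivity : 0 < (1 - θ) * τ * √2)
  refine ⟨U, hU, 2 + C, by finiteness, fun F hF u hu => ?_⟩
  have hsplit : {ω | ∃ t ∈ F, u < |X t ω|} ⊆
      {ω | θ * u < |X t₀ ω|} ∪ {ω | ∃ t ∈ F, (1 - θ) * u < ‖X t ω - X t₀ ω‖} := by
    rintro ω ⟨t, ht, hut⟩
    refine (lt_or_ge (θ * u) |X t₀ ω|).imp id fun h => ⟨t, ht, ?_⟩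
    have := abs_sub_abs_le_abs_sub (X t ω) (X t₀ ω)
    rw [Real.norm_eq_abs]
    linarith
  have hexp₀ : -(θ * u) ^ 2 / (2 * (θ * τ) ^ 2) = -u ^ 2 / (2 * τ ^ 2) := by
    field_simp
  have hexp₁ : -((1 - θ) * u / ((1 - θ) * τ * √2)) ^ 2 = -u ^ 2 / (2 * τ ^ 2) := by
    simp only [div_pow, mul_pow, Real.sq_sqrt zero_le_two]
    field_simp
  refine (measure_mono hsplit).trans ((measure_union_le _ _).trans ?_)
  rw [add_mul]
  gcongr
  · exact hexp₀ ▸ measure_lt_abs_le_of_hasSubgaussianMGF hsub (by positivity)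
  · exact hexp₁ ▸ hincr F hF _ (by positivity)

end Real

end IsCenteredGaussianProcess

/-- The finite-dimensional laws of `Y` are invariant under translations of time. -/
def IsStationaryProcess {Ω T E : Type*} [MeasurableSpace Ω] [Add T] [MeasurableSpace E]
    (Y : T → Ω → E) (P : Measure Ω) : Prop :=
  ∀ (h : T) (n : ℕ) (t : Fin n → T),
    P.map (fun ω i => Y (h + t i) ω) = P.map (fun ω i => Y (t i) ω)

namespace IsStationaryProcess

theorem measure_exists_mem_finset_add {Ω T E : Type*} {mΩ : MeasurableSpace Ω} {P : Measure Ω}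
    [Add T] [MeasurableSpace E] {Y : T → Ω → E} (hY : IsStationaryProcess Y P)
    (hYm : ∀ t, AEMeasurable (Y t) P) {A : Set E} (hA : MeasurableSet A) (h : T) (F : Finset T) :
    P {ω | ∃ t ∈ F, Y (h + t) ω ∈ A} = P {ω | ∃ t ∈ F, Y t ω ∈ A} := by
  let t (i : Fin F.card) : T := F.equivFin.symm i
  have hB : MeasurableSet {x : Fin F.card → E | ∃ i, x i ∈ A} := by
    simp only [ofPred_exists]
    exact .iUnion fun i => measurable_pi_apply i hA
  have hlaw (g : T → T) : P {ω | ∃ s ∈ F, Y (g s) ω ∈ A} =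
      P.map (fun ω i => Y (g (t i)) ω) {x | ∃ i, x i ∈ A} := by
    rw [Measure.map_apply_of_aemeasurable (aemeasurable_pi_lambda _ fun i => hYm _) hB]
    congr 1 with ω
    have hsubtype : (∃ s ∈ F, Y (g s) ω ∈ A) ↔ ∃ s : F, Y (g s) ω ∈ A := by
      simp only [Subtype.exists, exists_prop]
    exact hsubtype.trans F.equivFin.symm.surjective.exists
  rw [hlaw (h + ·), hY, ← hlaw fun s => s]

variable {Ω : Type*} {mΩ : MeasurableSpace Ω} {P : Measure Ω} {Y : ℝ → Ω → ℝ}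

theorem exists_measure_exists_mem_Icc_lt_abs_le (hY : IsStationaryProcess Y P)
    (hgauss : IsCenteredGaussianProcess Y P) (hcont : ∀ᵐ ω ∂P, Continuous (Y · ω)) {τ : ℝ}
    (hτ : √Var[Y 0; P] < τ) :
    ∃ h > 0, ∃ C ≠ ∞, ∀ s, ∀ u ≥ 0, P {ω | ∃ t ∈ Icc s (s + h), u < |Y t ω|} ≤
      C * ENNReal.ofReal (Real.exp (-u ^ 2 / (2 * τ ^ 2))) := by
  obtain ⟨U, hU, C, hC, hbound⟩ := hgauss.exists_mem_nhds_measure_exists_mem_lt_abs_le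
    (hcont.mono fun ω hω => hω.continuousAt) hτ
  obtain ⟨h, hh, hhU⟩ := Metric.nhds_basis_closedBall.mem_iff.1 hU
  refine ⟨h, hh, C, hC, fun s u hu => ?_⟩
  refine measure_exists_mem_lt_norm_le_of_finset (hcont.mono fun ω hω => hω.continuousOn)
    fun F hF => ?_
  have hshift := hY.measure_exists_mem_finset_add hgauss.isGaussianProcess.aemeasurable
    (measurableSet_lt measurable_const measurable_norm : MeasurableSet {x : ℝ | u < ‖x‖}) s
    (F.image (· - s))
  have hFU : ↑(F.image (· - s)) ⊆ U := by
    refine Subset.trans ?_ hhU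
    rw [Finset.coe_image, image_subset_iff]
    intro t ht
    rw [mem_preimage, mem_closedBall_zero_iff, Real.norm_eq_abs, abs_le]
    constructor <;> linarith [(hF ht).1, (hF ht).2]
  simp only [Finset.exists_mem_image, add_sub_cancel, mem_ofPred_eq] at hshift
  rw [hshift]
  simpa only [Finset.exists_mem_image, Real.norm_eq_abs] using hbound _ hFU u hu

theorem ae_eventually_abs_le (hY : IsStationaryProcess Y P)
    (hgauss : IsCenteredGaussianProcess Y P) (hcont : ∀ᵐ ω ∂P, Continuous (Y · ω)) {M : ℝ}
    (hM : √Var[Y 0; P] < M) :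
    ∀ᵐ ω ∂P, ∀ᶠ t in atTop, |Y t ω| ≤ M * √(2 * Real.log t) := by
  obtain ⟨τ, hτ, hτM⟩ := exists_between hM
  have hτ0 : 0 < τ := (Real.sqrt_nonneg _).trans_lt hτ
  have hM0 : 0 < M := hτ0.trans hτM
  obtain ⟨h, hh, C, hC, htail⟩ := hY.exists_measure_exists_mem_Icc_lt_abs_le hgauss hcont hτ
  let s (k : ℕ) : ℝ := (k + 1 : ℕ) * h
  have hs (k : ℕ) : 0 < s k := by positivity
  let u (k : ℕ) : ℝ := M * √(2 * Real.log (s k))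
  have hblock (k : ℕ) : P {ω | ∃ t ∈ Icc (s k) (s k + h), u k < |Y t ω|} ≤
      C * ENNReal.ofReal (s k ^ (-(M / τ) ^ 2)) := by
    refine (htail (s k) (u k) (by positivity)).trans ?_
    gcongr
    exact exp_neg_sq_mul_sqrt_two_log_div_le (hs k) M τ
  have hsummable : Summable fun k => s k ^ (-(M / τ) ^ 2) := by
    have hexp : -(M / τ) ^ 2 < -1 :=
      neg_lt_neg (one_lt_pow₀ ((one_lt_div hτ0).2 hτM) two_ne_zero)
    simp only [s, Real.mul_rpow (Nat.cast_nonneg _) hh.le]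
    exact ((summable_nat_add_iff 1).2 (Real.summable_nat_rpow.2 hexp)).mul_right _
  have hsum : ∑' k, P {ω | ∃ t ∈ Icc (s k) (s k + h), u k < |Y t ω|} ≠ ∞ :=
    ne_top_of_le_ne_top (ENNReal.tsum_mul_left ▸
      ENNReal.mul_ne_top hC hsummable.tsum_ofReal_ne_top) (ENNReal.tsum_le_tsum hblock)
  filter_upwards [ae_eventually_notMem hsum] with ω hω
  refine eventually_atTop_of_eventually_forall_mem_Icc hh ?_
  rw [← map_add_atTop_eq_nat 1, eventually_map]
  filter_upwards [hω] with k hk t ht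
  calc |Y t ω| ≤ M * √(2 * Real.log (s k)) := not_lt.1 fun hut => hk ⟨t, ht, hut⟩
    _ ≤ M * √(2 * Real.log t) := by
      gcongr
      exact ht.1

theorem ae_limsup_abs_div_sqrt_two_log_le (hY : IsStationaryProcess Y P)
    (hgauss : IsCenteredGaussianProcess Y P) (hcont : ∀ᵐ ω ∂P, Continuous (Y · ω)) :
    ∀ᵐ ω ∂P, limsup (fun t => |Y t ω| / √(2 * Real.log t)) atTop ≤ √Var[Y 0; P] := by
  have hrat : ∀ᵐ ω ∂P, ∀ q : ℚ, √Var[Y 0; P] < q →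
      ∀ᶠ t in atTop, |Y t ω| ≤ q * √(2 * Real.log t) :=
    ae_all_iff.2 fun q =>
      eventually_imp_distrib_left.2 fun hq => hY.ae_eventually_abs_le hgauss hcont hq
  filter_upwards [hrat] with ω hω
  have hcobdd : IsCoboundedUnder (· ≤ ·) atTop fun t => |Y t ω| / √(2 * Real.log t) :=
    (isBoundedUnder_of_eventually_ge (a := 0)
      (.of_forall fun t => by positivity)).isCoboundedUnder_le
  refine le_of_forall_lt_rat_imp_le fun q hq => limsup_le_of_le hcobdd ?_
  have hq0 : (0 : ℝ) ≤ q := (Real.sqrt_nonneg _).trans hq.le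
  exact (hω q hq).mono fun t ht => div_le_of_le_mul₀ (by positivity) hq0 ht

theorem ae_bddAbove_abs_div_sqrt_log (hY : IsStationaryProcess Y P)
    (hgauss : IsCenteredGaussianProcess Y P) (hcont : ∀ᵐ ω ∂P, Continuous (Y · ω)) {a : ℝ}
    (ha : 1 < a) : ∀ᵐ ω ∂P, BddAbove ((fun t => |Y t ω| / √(Real.log t)) '' Ici a) := by
  filter_upwards [hcont, hY.ae_eventually_abs_le hgauss hcont (lt_add_one _)] with ω hω hev
  refine bddAbove_image_Ici_of_continuousOn_of_eventually_le
    (C := (√Var[Y 0; P] + 1) * √2) ?_ (hev.mono fun t ht => ?_)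
  · refine hω.abs.continuousOn.div (Real.continuousOn_log.mono ?_).sqrt fun t ht => ?_
    · exact fun t ht => (zero_lt_one.trans (ha.trans_le ht)).ne'
    · exact (Real.sqrt_pos.2 (Real.log_pos (ha.trans_le ht))).ne'
  · refine div_le_of_le_mul₀ (by positivity) (by positivity) (ht.trans_eq ?_)
    rw [Real.sqrt_mul zero_le_two, mul_assoc]

end IsStationaryProcess

/-- The process `X` is self-similar with exponent `ρ`. It is observed at positive times only, so its
values at `t ≤ 0` are irrelevant. -/
def IsSelfSimilarProcess {Ω E : Type*} [MeasurableSpace Ω] [MeasurableSpace E] [SMul ℝ E]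
    (X : ℝ → Ω → E) (ρ : ℝ) (P : Measure Ω) : Prop :=
  ∀ a, 0 < a → ∀ (n : ℕ) (t : Fin n → ℝ), (∀ i, 0 < t i) →
    P.map (fun ω i => X (a * t i) ω) = P.map (fun ω i => a ^ ρ • X (t i) ω)

/-- The Lamperti transform, which turns a process that is self-similar with exponent `ρ` into a
stationary one by running it in logarithmic time. -/
noncomputable def lamperti {Ω E : Type*} [SMul ℝ E] (ρ : ℝ) (X : ℝ → Ω → E) (s : ℝ) (ω : Ω) : E :=
  Real.exp (-(ρ * s)) • X (Real.exp s) ω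

theorem IsSelfSimilarProcess.isStationaryProcess_lamperti {Ω E : Type*} {mΩ : MeasurableSpace Ω}
    {P : Measure Ω} [MeasurableSpace E] [MulAction ℝ E] [MeasurableConstSMul ℝ E]
    {X : ℝ → Ω → E} {ρ : ℝ} (hX : IsSelfSimilarProcess X ρ P)
    (hXm : ∀ t, 0 < t → AEMeasurable (X t) P) : IsStationaryProcess (lamperti ρ X) P := by
  intro h n t
  let D (x : Fin n → E) (i : Fin n) : E := Real.exp (-(ρ * (h + t i))) • x i
  have hD : Measurable D := by fun_prop
  have hXt (i : Fin n) : AEMeasurable (X (Real.exp (t i))) P := hXm _ (Real.exp_pos _)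
  have hXht (i : Fin n) : AEMeasurable (X (Real.exp h * Real.exp (t i))) P :=
    hXm _ (by positivity)
  calc P.map (fun ω i => lamperti ρ X (h + t i) ω)
      = (P.map fun ω i => X (Real.exp h * Real.exp (t i)) ω).map D := by
        rw [AEMeasurable.map_map_of_aemeasurable hD.aemeasurable (by fun_prop)]
        simp only [D, Function.comp_def, lamperti, Real.exp_add]
    _ = (P.map fun ω i => Real.exp h ^ ρ • X (Real.exp (t i)) ω).map D := by
        rw [hX _ (Real.exp_pos h) n _ fun i => Real.exp_pos (t i)]
    _ = P.map (fun ω i => lamperti ρ X (t i) ω) := by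
        rw [AEMeasurable.map_map_of_aemeasurable hD.aemeasurable (by fun_prop)]
        simp only [D, Function.comp_def, lamperti, smul_smul, ← Real.exp_mul, ← Real.exp_add]
        ring_nf

section Lamperti

variable {Ω : Type*} {mΩ : MeasurableSpace Ω} {P : Measure Ω} {X : ℝ → Ω → ℝ}

theorem isCenteredGaussianProcess_lamperti (ρ : ℝ) (hX : ∀ t, 0 < t → AEMeasurable (X t) P)
    (h : ∀ (n : ℕ) (t : Fin n → ℝ), (∀ i, 0 < t i) → ∀ c : Fin n → ℝ,
      ∃ v : ℝ≥0, P.map (fun ω => ∑ i, c i * X (t i) ω) = gaussianReal 0 v) :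
    IsCenteredGaussianProcess (lamperti ρ X) P := by
  refine .of_forall_map_sum_eq_gaussianReal
    (fun s => (hX _ (Real.exp_pos s)).const_smul (Real.exp (-(ρ * s)))) fun n s c => ?_
  simpa only [lamperti, smul_eq_mul, mul_assoc] using
    h n (fun i => Real.exp (s i)) (fun i => Real.exp_pos _) fun i => c i * Real.exp (-(ρ * s i))

theorem continuous_lamperti {ω : Ω} (ρ : ℝ) (hX : ContinuousOn (X · ω) (Ioi 0)) :
    Continuous (lamperti ρ X · ω) :=
  (by fun_prop : Continuous fun s => Real.exp (-(ρ * s))).smul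
    (hX.comp_continuous Real.continuous_exp Real.exp_pos)

theorem abs_lamperti_div (ρ : ℝ) (X : ℝ → Ω → ℝ) (s D : ℝ) (ω : Ω) :
    |lamperti ρ X s ω| / D = |X (Real.exp s) ω| / (Real.exp s ^ ρ * D) := by
  rw [lamperti, smul_eq_mul, abs_mul, Real.abs_exp, ← Real.exp_mul, Real.exp_neg, mul_comm ρ s]
  field_simp

end Lamperti

/-- Theorem 2.1: asymptotic growth of a continuous self-similar centered Gaussian
process.  -/
theorem stmt_0 {Ω : Type*} [MeasurableSpace Ω] (P : Measure Ω) [IsProbabilityMeasure P]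
    (X : ℝ → Ω → ℝ) (ρ σ : ℝ) (hσ : 0 < σ)
    (hmeas : ∀ t : ℝ, 0 < t → Measurable (X t))
    (hcont : ∀ᵐ ω ∂P, ContinuousOn (fun t => X t ω) (Set.Ioi (0 : ℝ)))
    (hgauss : ∀ (n : ℕ) (t : Fin n → ℝ), (∀ i, 0 < t i) → ∀ c : Fin n → ℝ,
      ∃ v : NNReal, P.map (fun ω => ∑ i, c i * X (t i) ω) = gaussianReal 0 v)
    (hss : ∀ a : ℝ, 0 < a → ∀ (n : ℕ) (t : Fin n → ℝ), (∀ i, 0 < t i) →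
      P.map (fun ω => fun i => X (a * t i) ω) = P.map (fun ω => fun i => a ^ ρ * X (t i) ω))
    (hvar : ∫ ω, (X 1 ω) ^ 2 ∂P = σ ^ 2) :
    (∀ᵐ ω ∂P, limsup (fun t : ℝ =>
        |X t ω| / (t ^ ρ * Real.sqrt (2 * Real.log (Real.log t)))) atTop ≤ σ)
    ∧ (∀ᵐ ω ∂P, ∃ M : ℝ, ∀ t : ℝ, 3 ≤ t →
        |X t ω| / (t ^ ρ * Real.sqrt (Real.log (Real.log t))) ≤ M) := by
  have hXm (t : ℝ) (ht : 0 < t) : AEMeasurable (X t) P := (hmeas t ht).aemeasurable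
  have hstat : IsStationaryProcess (lamperti ρ X) P :=
    IsSelfSimilarProcess.isStationaryProcess_lamperti hss hXm
  have hYgauss : IsCenteredGaussianProcess (lamperti ρ X) P :=
    isCenteredGaussianProcess_lamperti ρ hXm hgauss
  have hYcont : ∀ᵐ ω ∂P, Continuous (lamperti ρ X · ω) :=
    hcont.mono fun ω hω => continuous_lamperti ρ hω
  have hsd : √Var[lamperti ρ X 0; P] = σ := by
    rw [variance_of_integral_eq_zero (hYgauss.isGaussianProcess.aemeasurable 0)
      (hYgauss.integral_eq_zero 0)]
    simp [lamperti, hvar, hσ.le]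
  constructor
  · filter_upwards [hstat.ae_limsup_abs_div_sqrt_two_log_le hYgauss hYcont] with ω hω
    rw [hsd] at hω
    rw [← Real.map_exp_atTop, ← limsup_comp]
    simpa only [abs_lamperti_div, Function.comp_def, Real.log_exp] using hω
  · have hlog3 : 1 < Real.log 3 := (Real.lt_log_iff_exp_lt zero_lt_three).2 Real.exp_one_lt_three
    filter_upwards [hstat.ae_bddAbove_abs_div_sqrt_log hYgauss hYcont hlog3] with ω ⟨M, hM⟩
    refine ⟨M, fun t ht => ?_⟩
    have ht0 : 0 < t := zero_lt_three.trans_le ht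
    simpa only [abs_lamperti_div, Real.exp_log ht0] using
      forall_mem_image.1 hM (Real.log_le_log zero_lt_three ht)
end

section
/- Let α, β, γ be real numbers with α > -1/2, γ > -1 and α + β + γ > -3/2, and suppose β + γ ≥ −1. For t ≥ 1 define F(t) = ∫₀¹ s^{2α} (∫ₛ¹ u^β (u−s)^γ du) (∫ₜ^{t+1} v^β (v−s)^γ dv) ds. Then the series ∑_{n=1}^∞ F(n) diverges to +∞ and the integral ∫₁^∞ F(t) dt is infinite. -/
open MeasureTheory Filter intervalIntegral

/-!
The increment factor `∫ v in t..(t + 1), v ^ β * (v - s) ^ γ` is at least a constant multiple of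
`t ^ (β + γ) ≥ t⁻¹`, uniformly in `s ∈ [0, 1]`, because `v - s` is comparable to `v` once `t ≥ 2`.
The remaining factor `s ^ (2 * α) * ∫ u in s..1, u ^ β * (u - s) ^ γ` has a positive and finite
integral over `(0, 1)`: since `u = s + (u - s)` dominates both `s` and `u - s`, a negative power of
`u` can be shared between the two, and `-2 < 2 * α + β + γ` leaves both exponents above `-1`.
Hence `F t ≥ k * t⁻¹` with `k > 0`, and both claims follow from the divergence of the harmonic
series and of `∫ t⁻¹`. Finiteness matters: a Bochner integral that diverges is `0`.
-/

section Divergence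

lemma tendsto_sum_range_atTop_of_eventually_le {M : Type*} [AddCommGroup M] [PartialOrder M]
    [IsOrderedAddMonoid M] {f g : ℕ → M} (hfg : f ≤ᶠ[atTop] g)
    (hf : Tendsto (fun N => ∑ n ∈ Finset.range N, f n) atTop atTop) :
    Tendsto (fun N => ∑ n ∈ Finset.range N, g n) atTop atTop := by
  obtain ⟨m, hm⟩ := eventually_atTop.1 hfg
  have hdiff : ∀ᶠ N in atTop, ∑ n ∈ Finset.range m, (g n - f n) ≤
      ∑ n ∈ Finset.range N, (g n - f n) := by
    filter_upwards [eventually_ge_atTop m] with N hN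
    refine Finset.sum_le_sum_of_subset_of_nonneg (Finset.range_mono hN) fun n _ hn => ?_
    exact sub_nonneg.2 (hm n (by simpa using hn))
  refine (tendsto_atTop_add_left_of_le' atTop _ hdiff hf).congr fun N => ?_
  rw [← Finset.sum_add_distrib]
  simp only [sub_add_cancel]

lemma tendsto_sum_range_atTop_of_eventually_inv_le {F : ℝ → ℝ} {k : ℝ} (hk : 0 < k)
    (hF : ∀ᶠ t in atTop, k * t⁻¹ ≤ F t) :
    Tendsto (fun N : ℕ => ∑ n ∈ Finset.range N, F (n + 1)) atTop atTop := by
  have hharmonic := Real.tendsto_sum_range_one_div_nat_succ_atTop.const_mul_atTop hk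
  simp only [Finset.mul_sum, one_div] at hharmonic
  have hsucc : Tendsto (fun n : ℕ => (n : ℝ) + 1) atTop atTop :=
    tendsto_atTop_add_const_right _ _ tendsto_natCast_atTop_atTop
  exact tendsto_sum_range_atTop_of_eventually_le (hsucc.eventually hF) hharmonic

lemma lintegral_Ioi_ofReal_inv_eq_top {a : ℝ} (ha : 0 ≤ a) :
    ∫⁻ t in Set.Ioi a, ENNReal.ofReal t⁻¹ = ⊤ := by
  by_contra hfin
  refine not_integrableOn_Ioi_inv ((lintegral_ofReal_ne_top_iff_integrable ?_ ?_).1 hfin)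
  · fun_prop
  · filter_upwards [ae_restrict_mem measurableSet_Ioi] with t ht
    exact inv_nonneg.2 (ha.trans ht.le)

lemma lintegral_Ici_ofReal_eq_top_of_eventually_inv_le {F : ℝ → ℝ} {k : ℝ} (a : ℝ) (hk : 0 < k)
    (hF : ∀ᶠ t in atTop, k * t⁻¹ ≤ F t) :
    ∫⁻ t in Set.Ici a, ENNReal.ofReal (F t) = ⊤ := by
  obtain ⟨b, hb⟩ := eventually_atTop.1 (hF.and (eventually_ge_atTop (max a 0)))
  have hab : max a 0 ≤ b := (hb b le_rfl).2
  refine top_le_iff.1 ?_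
  calc ⊤ = ENNReal.ofReal k * ∫⁻ t in Set.Ioi b, ENNReal.ofReal t⁻¹ := by
        rw [lintegral_Ioi_ofReal_inv_eq_top ((le_max_right a 0).trans hab),
          ENNReal.mul_top (ENNReal.ofReal_pos.2 hk).ne']
    _ = ∫⁻ t in Set.Ioi b, ENNReal.ofReal (k * t⁻¹) := by
        rw [← lintegral_const_mul' _ _ ENNReal.ofReal_ne_top]
        simp only [ENNReal.ofReal_mul hk.le]
    _ ≤ ∫⁻ t in Set.Ioi b, ENNReal.ofReal (F t) :=
        setLIntegral_mono' measurableSet_Ioi fun t ht =>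
          ENNReal.ofReal_le_ofReal (hb t ht.le).1
    _ ≤ ∫⁻ t in Set.Ici a, ENNReal.ofReal (F t) :=
        lintegral_mono_set fun t ht => (le_max_left a 0).trans (hab.trans ht.le)

end Divergence

lemma stronglyMeasurable_intervalIntegral {X E : Type*} [MeasurableSpace X]
    [NormedAddCommGroup E] [NormedSpace ℝ E] {μ : Measure ℝ} [SFinite μ] {f : X → ℝ → E}
    {a b : X → ℝ} (hf : StronglyMeasurable (Function.uncurry f)) (ha : Measurable a)
    (hb : Measurable b) : StronglyMeasurable fun x => ∫ y in a x..b x, f x y ∂μ := by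
  have hIoc : ∀ {l r : X → ℝ}, Measurable l → Measurable r →
      StronglyMeasurable fun x => ∫ y in Set.Ioc (l x) (r x), f x y ∂μ := by
    intro l r hl hr
    have hset : MeasurableSet {p : X × ℝ | p.2 ∈ Set.Ioc (l p.1) (r p.1)} :=
      (measurableSet_lt (hl.comp measurable_fst) measurable_snd).inter
        (measurableSet_le measurable_snd (hr.comp measurable_fst))
    simp only [← MeasureTheory.integral_indicator measurableSet_Ioc]
    exact (hf.indicator hset).integral_prod_right'
  exact (hIoc ha hb).sub (hIoc hb ha)

section Exponents

lemma exists_mem_Ico_le_add {x y z : ℝ} (hx : 0 < x) (hy : 0 < y) (hz : z < x + y) :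
    ∃ p ∈ Set.Ico 0 x, ∃ q ∈ Set.Ico 0 y, z ≤ p + q := by
  set ε := (x + y - z) / 2 with hε
  have hε_pos : 0 < ε := by linarith
  refine ⟨max 0 (x - ε), ⟨le_max_left _ _, max_lt hx (by linarith)⟩,
    max 0 (y - ε), ⟨le_max_left _ _, max_lt hy (by linarith)⟩, ?_⟩
  linarith [le_max_right 0 (x - ε), le_max_right 0 (y - ε)]

lemma rpow_le_rpow_abs_mul_rpow {x y K : ℝ} (r : ℝ) (hx : 0 < x) (hy : 0 < y)
    (hxy : x ≤ K * y) (hyx : y ≤ K * x) : x ^ r ≤ K ^ |r| * y ^ r := by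
  have hK : 0 < K := pos_of_mul_pos_left (hx.trans_le hxy) hy.le
  rcases le_total 0 r with hr | hr
  · rw [abs_of_nonneg hr, ← Real.mul_rpow hK.le hy.le]
    exact Real.rpow_le_rpow hx.le hxy hr
  · rw [abs_of_nonpos hr, Real.rpow_neg hK.le, ← div_eq_inv_mul, le_div_iff₀' (by positivity),
      ← Real.mul_rpow hK.le hx.le]
    exact Real.rpow_le_rpow_of_nonpos hy hyx hr

lemma add_rpow_le_mul_rpow_neg_mul_rpow_neg {x y p q : ℝ} (b : ℝ) (hx : 0 < x) (hy : 0 < y)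
    (hp : 0 ≤ p) (hq : 0 ≤ q) :
    (x + y) ^ b ≤ (x + y) ^ (b + p + q) * (x ^ (-p) * y ^ (-q)) := by
  have hadd : 0 < x + y := add_pos hx hy
  calc (x + y) ^ b = (x + y) ^ (b + p + q) * ((x + y) ^ (-p) * (x + y) ^ (-q)) := by
        rw [← Real.rpow_add hadd, ← Real.rpow_add hadd]
        congr 1
        ring
    _ ≤ (x + y) ^ (b + p + q) * (x ^ (-p) * y ^ (-q)) := by
        gcongr ?_ * (?_ * ?_)
        · exact Real.rpow_le_rpow_of_nonpos hx (by linarith) (by linarith)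
        · exact Real.rpow_le_rpow_of_nonpos hy (by linarith) (by linarith)

end Exponents

/-- The incomplete beta integral `∫ u in x..y, u ^ b * (u - s) ^ c` with singularities at `0` and
`s`. In terms of it, the process is `X_t = ∫₀ᵗ s ^ α * shiftedBetaIntegral β γ s s t dW_s`, and
`X_{t+1} - X_t` has kernel `s ^ α * shiftedBetaIntegral β γ s t (t + 1)` for `s < t`. -/
noncomputable def shiftedBetaIntegral (b c s x y : ℝ) : ℝ :=
  ∫ u in x..y, u ^ b * (u - s) ^ c

namespace shiftedBetaIntegral

variable {a b c s t x y : ℝ}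

lemma intervalIntegrable_integrand (hc : -1 < c) (h0 : (0 : ℝ) ∉ Set.uIcc x y) :
    IntervalIntegrable (fun u => u ^ b * (u - s) ^ c) volume x y := by
  have hsub : IntervalIntegrable (fun u => (u - s) ^ c) volume x y := by
    simpa using (intervalIntegrable_rpow' hc (a := x - s) (b := y - s)).comp_sub_right s
  refine hsub.continuousOn_mul (continuousOn_id.rpow_const fun u hu => Or.inl ?_)
  exact ne_of_mem_of_not_mem hu h0

lemma stronglyMeasurable_self_left (b c y : ℝ) :
    StronglyMeasurable fun s => shiftedBetaIntegral b c s s y := by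
  refine stronglyMeasurable_intervalIntegral (Measurable.stronglyMeasurable ?_)
    measurable_id measurable_const
  fun_prop

lemma continuousOn_Iio (b c : ℝ) (hx : 0 < x) (hxy : x ≤ y) :
    ContinuousOn (fun s => shiftedBetaIntegral b c s x y) (Set.Iio x) := by
  -- Replacing `u` by `max x u` changes nothing on `[x, y]` and removes the singularities.
  have hcont : Continuous fun s : Set.Iio x => ∫ u in x..y, max x u ^ b * (max x u - s) ^ c := by
    refine continuous_parametric_intervalIntegral_of_continuous' ?_ x y
    refine Continuous.mul ?_ ?_ <;> refine Continuous.rpow_const (by fun_prop) fun p => Or.inl ?_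
    · exact (hx.trans_le (le_max_left x p.2)).ne'
    · exact (sub_pos.2 (p.1.2.trans_le (le_max_left x p.2))).ne'
  refine continuousOn_iff_continuous_domRestrict.2 (hcont.congr fun s => ?_)
  refine integral_congr fun u hu => ?_
  rw [Set.uIcc_of_le hxy] at hu
  simp only [max_eq_right hu.1]

lemma self_left_pos (b : ℝ) (hc : -1 < c) (hs : 0 < s) (hsy : s < y) :
    0 < shiftedBetaIntegral b c s s y := by
  refine intervalIntegral_pos_of_pos_on (intervalIntegrable_integrand hc
    (Set.notMem_uIcc_of_lt hs (hs.trans hsy))) (fun u hu => ?_) hsy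
  exact mul_pos (Real.rpow_pos_of_pos (hs.trans hu.1) b)
    (Real.rpow_pos_of_pos (sub_pos.2 hu.1) c)

lemma integrand_le {p q u : ℝ} (hs : 0 < s) (hsu : s < u) (huy : u ≤ y) (hp : 0 ≤ p) (hq : 0 ≤ q)
    (hb : -b ≤ p + q) :
    u ^ b * (u - s) ^ c ≤ y ^ (b + p + q) * s ^ (-p) * (u - s) ^ (c - q) := by
  have hu : 0 < u := hs.trans hsu
  have hus : 0 < u - s := sub_pos.2 hsu
  have hub : u ^ b ≤ u ^ (b + p + q) * (s ^ (-p) * (u - s) ^ (-q)) := by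
    simpa only [add_sub_cancel] using add_rpow_le_mul_rpow_neg_mul_rpow_neg b hs hus hp hq
  calc u ^ b * (u - s) ^ c ≤ u ^ (b + p + q) * (s ^ (-p) * (u - s) ^ (-q)) * (u - s) ^ c := by
        gcongr
    _ ≤ y ^ (b + p + q) * (s ^ (-p) * (u - s) ^ (-q)) * (u - s) ^ c := by
        gcongr
        linarith
    _ = y ^ (b + p + q) * s ^ (-p) * (u - s) ^ (c - q) := by
        rw [sub_eq_neg_add c q, Real.rpow_add hus]
        ring

lemma self_left_le {p q : ℝ} (hs : 0 < s) (hsy : s < y) (hp : 0 ≤ p) (hq : q ∈ Set.Ico 0 (c + 1))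
    (hb : -b ≤ p + q) :
    shiftedBetaIntegral b c s s y ≤
      y ^ (b + p + q) * s ^ (-p) * (y ^ (c - q + 1) / (c - q + 1)) := by
  have hy : 0 < y := hs.trans hsy
  have h0 : (0 : ℝ) ∉ Set.uIcc s y := Set.notMem_uIcc_of_lt hs hy
  have hcq : 0 < c - q + 1 := by linarith [hq.2]
  have hpow : ∫ u in s..y, (u - s) ^ (c - q) = (y - s) ^ (c - q + 1) / (c - q + 1) := by
    rw [integral_comp_sub_right (fun w => w ^ (c - q)), integral_rpow (Or.inl (by linarith)),
      sub_self, Real.zero_rpow hcq.ne', sub_zero]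
  have hintegrable : IntervalIntegrable (fun u => (u - s) ^ (c - q)) volume s y := by
    simpa using intervalIntegrable_integrand (b := 0) (c := c - q) (by linarith) h0
  calc shiftedBetaIntegral b c s s y
      ≤ ∫ u in s..y, y ^ (b + p + q) * s ^ (-p) * (u - s) ^ (c - q) :=
        integral_mono_on_of_le_Ioo hsy.le (intervalIntegrable_integrand (by linarith [hq.1]) h0)
          (hintegrable.const_mul _) fun u hu => integrand_le hs hu.1 hu.2.le hp hq.1 hb
    _ = y ^ (b + p + q) * s ^ (-p) * ((y - s) ^ (c - q + 1) / (c - q + 1)) := by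
        rw [intervalIntegral.integral_const_mul, hpow]
    _ ≤ y ^ (b + p + q) * s ^ (-p) * (y ^ (c - q + 1) / (c - q + 1)) := by
        gcongr _ * (?_ / _)
        exact Real.rpow_le_rpow (sub_nonneg.2 hsy.le) (by linarith) hcq.le

lemma intervalIntegrable_rpow_mul_self_left (ha : -1 < a) (hc : -1 < c) (habc : -2 < a + b + c)
    (hy : 0 < y) :
    IntervalIntegrable (fun s => s ^ a * shiftedBetaIntegral b c s s y) volume 0 y := by
  obtain ⟨p, hp, q, hq, hb⟩ := exists_mem_Ico_le_add (x := a + 1) (y := c + 1) (z := -b)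
    (by linarith) (by linarith) (by linarith)
  set C := y ^ (b + p + q) * (y ^ (c - q + 1) / (c - q + 1)) with hC
  have hdom : IntegrableOn (fun s : ℝ => C * s ^ (a - p)) (Set.Ioo 0 y) :=
    ((integrableOn_Ioo_rpow_iff hy).2 (by linarith [hp.2])).const_mul C
  rw [intervalIntegrable_iff_integrableOn_Ioo_of_le hy.le]
  refine hdom.mono' ?_ ?_
  · exact (Measurable.aestronglyMeasurable (by fun_prop)).mul
      (stronglyMeasurable_self_left b c y).aestronglyMeasurable
  · filter_upwards [ae_restrict_mem measurableSet_Ioo] with s hs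
    have hsa : 0 ≤ s ^ a := Real.rpow_nonneg hs.1.le a
    rw [Real.norm_of_nonneg (mul_nonneg hsa (self_left_pos b hc hs.1 hs.2).le)]
    calc s ^ a * shiftedBetaIntegral b c s s y
        ≤ s ^ a * (y ^ (b + p + q) * s ^ (-p) * (y ^ (c - q + 1) / (c - q + 1))) :=
          mul_le_mul_of_nonneg_left (self_left_le hs.1 hs.2 hp.1 hq hb) hsa
      _ = C * s ^ (a - p) := by
          rw [hC, sub_eq_add_neg a p, Real.rpow_add hs.1]
          ring

lemma integral_rpow_mul_self_left_pos (ha : -1 < a) (hc : -1 < c) (habc : -2 < a + b + c)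
    (hy : 0 < y) : 0 < ∫ s in (0 : ℝ)..y, s ^ a * shiftedBetaIntegral b c s s y :=
  intervalIntegral_pos_of_pos_on (intervalIntegrable_rpow_mul_self_left ha hc habc hy)
    (fun _ hs => mul_pos (Real.rpow_pos_of_pos hs.1 a) (self_left_pos b hc hs.1 hs.2)) hy

lemma mul_inv_le_rpow_mul_sub_rpow {v : ℝ} (hbc : -1 ≤ b + c) (hs : 0 ≤ s) (hsv : 2 * s ≤ v)
    (hv : 1 ≤ v) : 2 ^ (-|c|) * v⁻¹ ≤ v ^ b * (v - s) ^ c := by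
  have hv0 : 0 < v := one_pos.trans_le hv
  have hcomp : v ^ c ≤ 2 ^ |c| * (v - s) ^ c :=
    rpow_le_rpow_abs_mul_rpow c hv0 (by linarith) (by linarith) (by linarith)
  calc 2 ^ (-|c|) * v⁻¹ ≤ 2 ^ (-|c|) * v ^ (b + c) := by
        rw [← Real.rpow_neg_one v]
        gcongr
    _ = v ^ b * ((2 ^ |c|)⁻¹ * v ^ c) := by
        rw [Real.rpow_add hv0, Real.rpow_neg zero_le_two, mul_left_comm]
    _ ≤ v ^ b * (v - s) ^ c := by
        gcongr
        exact (inv_mul_le_iff₀ (by positivity)).2 hcomp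

lemma mul_inv_le_increment (hbc : -1 ≤ b + c) (hs : 0 ≤ s) (hst : 2 * s ≤ t) (ht : 1 ≤ t) :
    2 ^ (-|c|) / 2 * t⁻¹ ≤ shiftedBetaIntegral b c s t (t + 1) := by
  have hcont : ContinuousOn (fun v => v ^ b * (v - s) ^ c) (Set.uIcc t (t + 1)) := by
    rw [Set.uIcc_of_le (by linarith)]
    refine ContinuousOn.mul ?_ ?_ <;>
      refine ContinuousOn.rpow_const (by fun_prop) fun v hv => Or.inl ?_
    · exact (show 0 < v by linarith [hv.1]).ne'
    · exact (show 0 < v - s by linarith [hv.1]).ne'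
  calc 2 ^ (-|c|) / 2 * t⁻¹ = ∫ _ in t..(t + 1), 2 ^ (-|c|) / 2 * t⁻¹ := by simp
    _ ≤ shiftedBetaIntegral b c s t (t + 1) := by
        refine integral_mono_on (by linarith) intervalIntegrable_const hcont.intervalIntegrable
          fun v hv => ?_
        have hv0 : 0 < v := by linarith [hv.1]
        calc 2 ^ (-|c|) / 2 * t⁻¹ = 2 ^ (-|c|) * (2 * t)⁻¹ := by ring
          _ ≤ 2 ^ (-|c|) * v⁻¹ := by gcongr; linarith [hv.2]
          _ ≤ v ^ b * (v - s) ^ c :=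
              mul_inv_le_rpow_mul_sub_rpow hbc hs (hst.trans hv.1) (ht.trans hv.1)

lemma mul_inv_le_integral_mul_increment (ha : -1 < a) (hc : -1 < c) (hbc : -1 ≤ b + c)
    (hy : 0 < y) (hyt : 2 * y ≤ t) (ht : 1 ≤ t) :
    (∫ s in (0 : ℝ)..y, s ^ a * shiftedBetaIntegral b c s s y) * (2 ^ (-|c|) / 2) * t⁻¹ ≤
      ∫ s in (0 : ℝ)..y, s ^ a * shiftedBetaIntegral b c s s y *
        shiftedBetaIntegral b c s t (t + 1) := by
  have hintegrable := intervalIntegrable_rpow_mul_self_left (b := b) ha hc (by linarith) hy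
  have hcont : ContinuousOn (fun s => shiftedBetaIntegral b c s t (t + 1)) (Set.uIcc 0 y) := by
    refine (continuousOn_Iio b c (by linarith) (by linarith)).mono ?_
    rw [Set.uIcc_of_le hy.le]
    exact fun s hs => hs.2.trans_lt (by linarith)
  rw [mul_assoc, ← intervalIntegral.integral_mul_const]
  refine integral_mono_on_of_le_Ioo hy.le (hintegrable.mul_const _)
    (hintegrable.mul_continuousOn hcont) fun s hs => mul_le_mul_of_nonneg_left ?_ ?_
  · exact mul_inv_le_increment hbc hs.1.le (by linarith [hs.2]) ht
  · exact mul_nonneg (Real.rpow_nonneg hs.1.le a) (self_left_pos b hc hs.1 hs.2).le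

end shiftedBetaIntegral

/-- Theorem 3.3 (long-range dependence): if `β + γ ≥ -1` then the series
`∑_{n≥1} cov(X₁, X_{n+1} - X_n)` diverges to `+∞` and
`∫₁^∞ cov(X₁, X_{t+1} - X_t) dt` is infinite. -/
theorem stmt_3 (α β γ : ℝ) (hα : -(1/2 : ℝ) < α) (hγ : -1 < γ)
    (hαβγ : -(3/2 : ℝ) < α + β + γ) (hβγ : -1 ≤ β + γ)
    (F : ℝ → ℝ)
    (hF : ∀ t : ℝ, F t = ∫ s in (0:ℝ)..1, s ^ (2*α) *
      (∫ u in s..1, u ^ β * (u - s) ^ γ) *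
      (∫ v in t..(t+1), v ^ β * (v - s) ^ γ)) :
    Tendsto (fun N : ℕ => ∑ n ∈ Finset.range N, F (n + 1)) atTop atTop ∧
    (∫⁻ t in Set.Ici (1:ℝ), ENNReal.ofReal (F t)) = ⊤ := by
  have ha : -1 < 2 * α := by linarith
  have habc : -2 < 2 * α + β + γ := by linarith
  obtain ⟨k, hk, hkF⟩ : ∃ k : ℝ, 0 < k ∧ ∀ᶠ t in atTop, k * t⁻¹ ≤ F t := by
    refine ⟨_, mul_pos (shiftedBetaIntegral.integral_rpow_mul_self_left_pos ha hγ habc one_pos)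
      (by positivity : (0 : ℝ) < 2 ^ (-|γ|) / 2), ?_⟩
    filter_upwards [eventually_ge_atTop 2] with t ht
    rw [hF t]
    exact shiftedBetaIntegral.mul_inv_le_integral_mul_increment ha hγ hβγ one_pos
      (by linarith) (by linarith)
  exact ⟨tendsto_sum_range_atTop_of_eventually_inv_le hk hkF,
    lintegral_Ici_ofReal_eq_top_of_eventually_inv_le 1 hk hkF⟩
end

section
/- Let α, β, γ be real numbers with α > -1/2, γ > -1, α + β + γ > -3/2, and γ < −1/2. For t ≥ 0 define V(t) = ∫₀^{t+1} s^{2α} (∫_{max(s,t)}^{t+1} u^β (u−s)^γ du)² ds. Then lim_{t→+∞} V(t) / t^{2α+2β} = B(γ+1, −2γ−1) / ((γ+1)(2γ+3)), where B(a,b) = Γ(a)Γ(b)/Γ(a+b) is the Beta function. -/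
open MeasureTheory Filter intervalIntegral

/-!
For `u ∈ [t, t + 1]` the factor `u ^ β` is asymptotic to `t ^ β`, uniformly. Replacing it by `t ^ β`
and reflecting `s = T - z` with `T = t + 1`, the ratio `V t / t ^ (2 * α + 2 * β)` becomes
`∫₀ᵀ (1 - z / T) ^ (2 * α) K(z)² dz`, where `K` is the convolution of `x₊ ^ γ` with the indicator of
`[0, 1]`. As `K(z)² = o(1 / z)` at infinity, the singularity at `z = T` does not contribute in the
limit, and the integral tends to `∫ K²`. Writing the square as a double integral and using Tonelli,
`∫ K² = ∬_{[0,1]²} ∫ (z - y)₊ ^ γ (z - x)₊ ^ γ dz dx dy`, whose inner integral is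
`B(γ + 1, -2 * γ - 1) |y - x| ^ (2 * γ + 1)`.
-/

namespace VolterraIncrement

open Set Asymptotics ProbabilityTheory
open scoped ENNReal Topology

theorem lintegral_sq_lintegral {X Y : Type*} [MeasurableSpace X] [MeasurableSpace Y]
    {μ : Measure X} {ν : Measure Y} [SFinite μ] [SFinite ν] {F : X → Y → ℝ≥0∞}
    (hF : Measurable (Function.uncurry F)) :
    ∫⁻ x, (∫⁻ y, F x y ∂ν) ^ 2 ∂μ = ∫⁻ y, ∫⁻ y', ∫⁻ x, F x y * F x y' ∂μ ∂ν ∂ν := by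
  have hF₁ (x : X) : Measurable (F x) := hF.comp measurable_prodMk_left
  have hF₃ : Measurable fun p : (X × Y) × Y => F p.1.1 p.1.2 * F p.1.1 p.2 :=
    (hF.comp measurable_fst).mul
      (hF.comp (by fun_prop : Measurable fun p : (X × Y) × Y => (p.1.1, p.2)))
  calc ∫⁻ x, (∫⁻ y, F x y ∂ν) ^ 2 ∂μ
      = ∫⁻ x, ∫⁻ y, ∫⁻ y', F x y * F x y' ∂ν ∂ν ∂μ := by
        refine lintegral_congr fun x => ?_
        simp_rw [lintegral_const_mul _ (hF₁ x)]
        rw [lintegral_mul_const _ (hF₁ x), sq]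
    _ = ∫⁻ y, ∫⁻ x, ∫⁻ y', F x y * F x y' ∂ν ∂μ ∂ν :=
        lintegral_lintegral_swap hF₃.lintegral_prod_right'.aemeasurable
    _ = ∫⁻ y, ∫⁻ y', ∫⁻ x, F x y * F x y' ∂μ ∂ν ∂ν :=
        lintegral_congr fun y => lintegral_lintegral_swap
          (hF₃.comp (by fun_prop : Measurable fun p : X × Y => ((p.1, y), p.2))).aemeasurable

theorem lintegral_rpow_mul_exp_neg_mul_Ioi {a r : ℝ} (ha : 0 < a) (hr : 0 < r) :
    ∫⁻ x in Ioi (0 : ℝ), ENNReal.ofReal (x ^ (a - 1) * Real.exp (-(r * x))) =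
      ENNReal.ofReal (r ^ (-a) * Real.Gamma a) := by
  have hint : IntegrableOn (fun x : ℝ => x ^ (a - 1) * Real.exp (-(r * x))) (Ioi 0) := by
    simpa using integrableOn_rpow_mul_exp_neg_mul_rpow (s := a - 1) (by linarith) one_pos hr
  rw [← ofReal_integral_eq_lintegral_ofReal hint, Real.integral_rpow_mul_exp_neg_mul_Ioi ha hr,
    one_div, Real.inv_rpow hr.le, Real.rpow_neg hr.le]
  filter_upwards [ae_restrict_mem measurableSet_Ioi] with x (hx : 0 < x)
  simp only [Pi.zero_apply]
  positivity

theorem Gamma_mul_lintegral_mul_add_rpow {c d : ℝ} (hc : 0 < c) (hd : 0 ≤ d) {f : ℝ → ℝ≥0∞}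
    (hf : Measurable f) :
    ENNReal.ofReal (Real.Gamma c) *
        ∫⁻ w in Ioi (0 : ℝ), f w * ENNReal.ofReal ((w + d) ^ (-c)) =
      ∫⁻ x in Ioi (0 : ℝ), ENNReal.ofReal (x ^ (c - 1) * Real.exp (-(d * x))) *
        ∫⁻ w in Ioi (0 : ℝ), f w * ENNReal.ofReal (Real.exp (-(x * w))) := by
  have hexp (w : ℝ) {x : ℝ} (hx : x ∈ Ioi 0) :
      ENNReal.ofReal (x ^ (c - 1) * Real.exp (-((w + d) * x))) =
        ENNReal.ofReal (x ^ (c - 1) * Real.exp (-(d * x))) *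
          ENNReal.ofReal (Real.exp (-(x * w))) := by
    rw [← ENNReal.ofReal_mul (mul_nonneg (Real.rpow_nonneg (le_of_lt hx) _) (Real.exp_nonneg _)),
      mul_assoc, ← Real.exp_add]
    ring_nf
  calc ENNReal.ofReal (Real.Gamma c) *
        ∫⁻ w in Ioi (0 : ℝ), f w * ENNReal.ofReal ((w + d) ^ (-c))
      = ∫⁻ w in Ioi (0 : ℝ), ∫⁻ x in Ioi (0 : ℝ),
          f w * ENNReal.ofReal (x ^ (c - 1) * Real.exp (-((w + d) * x))) := by
        rw [← lintegral_const_mul _ (by fun_prop)]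
        refine setLIntegral_congr_fun measurableSet_Ioi fun w (hw : 0 < w) => ?_
        rw [lintegral_const_mul _ (by fun_prop),
          lintegral_rpow_mul_exp_neg_mul_Ioi hc (add_pos_of_pos_of_nonneg hw hd),
          ENNReal.ofReal_mul' (Real.Gamma_pos_of_pos hc).le]
        ring
    _ = ∫⁻ x in Ioi (0 : ℝ), ∫⁻ w in Ioi (0 : ℝ),
          f w * ENNReal.ofReal (x ^ (c - 1) * Real.exp (-((w + d) * x))) :=
        lintegral_lintegral_swap (by fun_prop)
    _ = ∫⁻ x in Ioi (0 : ℝ), ENNReal.ofReal (x ^ (c - 1) * Real.exp (-(d * x))) *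
          ∫⁻ w in Ioi (0 : ℝ), f w * ENNReal.ofReal (Real.exp (-(x * w))) := by
        refine setLIntegral_congr_fun measurableSet_Ioi fun x hx => ?_
        simp only [hexp _ hx, mul_left_comm (f _)]
        rw [lintegral_const_mul _ (by fun_prop)]

theorem lintegral_rpow_mul_add_rpow {a b d : ℝ} (ha : 0 < a) (hb : 0 < b) (hd : 0 < d) :
    ∫⁻ w in Ioi (0 : ℝ), ENNReal.ofReal (w ^ (a - 1)) * ENNReal.ofReal ((w + d) ^ (-(a + b))) =
      ENNReal.ofReal (d ^ (-b) * beta a b) := by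
  have hΓ := Real.Gamma_pos_of_pos (add_pos ha hb)
  have hΓa := Real.Gamma_pos_of_pos ha
  have hlaplace {x : ℝ} (hx : x ∈ Ioi 0) : ENNReal.ofReal (x ^ (a + b - 1) * Real.exp (-(d * x))) *
      ∫⁻ w in Ioi (0 : ℝ), ENNReal.ofReal (w ^ (a - 1)) * ENNReal.ofReal (Real.exp (-(x * w))) =
      ENNReal.ofReal (Real.Gamma a) * ENNReal.ofReal (x ^ (b - 1) * Real.exp (-(d * x))) := by
    rw [mem_Ioi] at hx
    simp_rw [← ENNReal.ofReal_mul' (Real.exp_nonneg _)]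
    rw [lintegral_rpow_mul_exp_neg_mul_Ioi ha hx, ← ENNReal.ofReal_mul (by positivity),
      ← ENNReal.ofReal_mul (by positivity), show b - 1 = a + b - 1 + -a by ring,
      Real.rpow_add hx]
    ring_nf
  rw [← ENNReal.mul_right_inj (ENNReal.ofReal_pos.2 hΓ).ne' ENNReal.ofReal_ne_top,
    Gamma_mul_lintegral_mul_add_rpow (add_pos ha hb) hd.le (by fun_prop),
    setLIntegral_congr_fun measurableSet_Ioi fun x => hlaplace,
    lintegral_const_mul _ (by fun_prop), lintegral_rpow_mul_exp_neg_mul_Ioi hb hd,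
    ← ENNReal.ofReal_mul hΓa.le, ← ENNReal.ofReal_mul hΓ.le, beta]
  congr 1
  field_simp

theorem lintegral_Ioc_ofReal {f : ℝ → ℝ} {a b : ℝ} (hab : a ≤ b)
    (hf : IntervalIntegrable f volume a b) (hf₀ : ∀ x ∈ Ioc a b, 0 ≤ f x) :
    ∫⁻ x in Ioc a b, ENNReal.ofReal (f x) = ENNReal.ofReal (∫ x in a..b, f x) := by
  rw [integral_of_le hab, ofReal_integral_eq_lintegral_ofReal
    ((intervalIntegrable_iff_integrableOn_Ioc_of_le hab).1 hf)
    ((ae_restrict_mem measurableSet_Ioc).mono hf₀)]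

theorem intervalIntegrable_sub_rpow {r : ℝ} (hr : -1 < r) (a b c : ℝ) :
    IntervalIntegrable (fun x : ℝ => (x - c) ^ r) volume a b := by
  simpa using (intervalIntegrable_rpow' hr (a := a - c) (b := b - c)).comp_sub_right c

theorem integral_sub_rpow {r : ℝ} (hr : -1 < r) (a b c : ℝ) :
    ∫ x in a..b, (x - c) ^ r = ((b - c) ^ (r + 1) - (a - c) ^ (r + 1)) / (r + 1) := by
  rw [integral_comp_sub_right (fun x : ℝ => x ^ r), integral_rpow (Or.inl hr)]

theorem lintegral_abs_sub_rpow {a b c y : ℝ} (hc : -1 < c) (hy : y ∈ Ioc a b) :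
    ∫⁻ x in Ioc a b, ENNReal.ofReal (|y - x| ^ c) =
      ENNReal.ofReal (((y - a) ^ (c + 1) + (b - y) ^ (c + 1)) / (c + 1)) := by
  have hc' : 0 < c + 1 := by linarith
  have left : ∫⁻ x in Ioc a y, ENNReal.ofReal (|y - x| ^ c) =
      ENNReal.ofReal ((y - a) ^ (c + 1) / (c + 1)) := by
    rw [setLIntegral_congr_fun measurableSet_Ioc
      fun x hx => by rw [abs_of_nonneg (sub_nonneg.2 hx.2)],
      lintegral_Ioc_ofReal hy.1.le, integral_comp_sub_left (fun x : ℝ => x ^ c),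
      integral_rpow (Or.inl hc), sub_self, Real.zero_rpow hc'.ne', sub_zero]
    · simpa using (intervalIntegrable_rpow' hc (a := y - a) (b := 0)).comp_sub_left y
    · exact fun x hx => Real.rpow_nonneg (sub_nonneg.2 hx.2) _
  have right : ∫⁻ x in Ioc y b, ENNReal.ofReal (|y - x| ^ c) =
      ENNReal.ofReal ((b - y) ^ (c + 1) / (c + 1)) := by
    rw [setLIntegral_congr_fun measurableSet_Ioc
      fun x hx => by rw [abs_sub_comm, abs_of_nonneg (sub_nonneg.2 hx.1.le)],
      lintegral_Ioc_ofReal hy.2 (intervalIntegrable_sub_rpow hc y b y), integral_sub_rpow hc,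
      sub_self, Real.zero_rpow hc'.ne', sub_zero]
    exact fun x hx => Real.rpow_nonneg (sub_nonneg.2 hx.1.le) _
  rw [← Ioc_union_Ioc_eq_Ioc hy.1.le hy.2,
    lintegral_union measurableSet_Ioc (Ioc_disjoint_Ioc_of_le le_rfl), left, right,
    ← ENNReal.ofReal_add, add_div]
  · exact div_nonneg (Real.rpow_nonneg (sub_nonneg.2 hy.1.le) _) hc'.le
  · exact div_nonneg (Real.rpow_nonneg (sub_nonneg.2 hy.2) _) hc'.le

theorem lintegral_lintegral_abs_sub_rpow {a b c : ℝ} (hc : -1 < c) (hab : a ≤ b) :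
    ∫⁻ y in Ioc a b, ∫⁻ x in Ioc a b, ENNReal.ofReal (|y - x| ^ c) =
      ENNReal.ofReal (2 * (b - a) ^ (c + 2) / ((c + 1) * (c + 2))) := by
  have hc₁ : 0 < c + 1 := by linarith
  have hc₂ : 0 < c + 2 := by linarith
  have hleft : IntervalIntegrable (fun y : ℝ => (y - a) ^ (c + 1)) volume a b :=
    intervalIntegrable_sub_rpow (by linarith) a b a
  have hright : IntervalIntegrable (fun y : ℝ => (b - y) ^ (c + 1)) volume a b :=
    ((continuous_sub_left b).rpow_const fun _ => Or.inr hc₁.le).intervalIntegrable a b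
  have hsum : IntervalIntegrable (fun y => ((y - a) ^ (c + 1) + (b - y) ^ (c + 1)) / (c + 1))
      volume a b := (hleft.add hright).div_const _
  rw [setLIntegral_congr_fun measurableSet_Ioc fun y hy => lintegral_abs_sub_rpow hc hy,
    lintegral_Ioc_ofReal hab hsum]
  · rw [intervalIntegral.integral_div, intervalIntegral.integral_add hleft hright,
      integral_comp_sub_left (fun x : ℝ => x ^ (c + 1)), integral_sub_rpow (by linarith),
      integral_rpow (Or.inl (by linarith)), sub_self, sub_self, Real.zero_rpow (by positivity),
      show c + 1 + 1 = c + 2 by ring]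
    congr 1
    field_simp
    ring
  · exact fun y hy => div_nonneg (add_nonneg (Real.rpow_nonneg (sub_nonneg.2 hy.1.le) _)
      (Real.rpow_nonneg (sub_nonneg.2 hy.2) _)) hc₁.le

/-- The truncated power `x₊ ^ γ`, extended-real-valued and equal to `0` for `x ≤ 0` whatever the
sign of `γ`. -/
noncomputable def truncPow (γ : ℝ) : ℝ → ℝ≥0∞ :=
  (Ioi 0).indicator fun x => ENNReal.ofReal (x ^ γ)

@[fun_prop]
theorem measurable_truncPow (γ : ℝ) : Measurable (truncPow γ) :=
  Measurable.indicator (by fun_prop) measurableSet_Ioi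

theorem lintegral_truncPow_sub_mul_truncPow_sub {γ y x : ℝ} (hγ : -1 < γ) (hγ' : γ < -(1 / 2))
    (hyx : y ≠ x) :
    ∫⁻ z, truncPow γ (z - y) * truncPow γ (z - x) =
      ENNReal.ofReal (|y - x| ^ (2 * γ + 1) * beta (γ + 1) (-2 * γ - 1)) := by
  wlog hlt : x < y generalizing x y
  · simpa only [abs_sub_comm x y, mul_comm (truncPow γ (_ - x))] using
      this hyx.symm (lt_of_le_of_ne (not_lt.1 hlt) hyx)
  have hd := sub_pos.2 hlt
  have hbeta := lintegral_rpow_mul_add_rpow (a := γ + 1) (b := -2 * γ - 1)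
    (by linarith) (by linarith) hd
  rw [show γ + 1 - 1 = γ by ring, show -(γ + 1 + (-2 * γ - 1)) = γ by ring,
    show -(-2 * γ - 1) = 2 * γ + 1 by ring] at hbeta
  rw [abs_of_pos hd, ← hbeta, ← lintegral_indicator measurableSet_Ioi,
    ← lintegral_sub_right_eq_self (indicator _ _) y]
  refine lintegral_congr fun z => ?_
  by_cases hz : 0 < z - y
  · rw [truncPow, indicator_of_mem (mem_Ioi.2 hz), indicator_of_mem (mem_Ioi.2 (by linarith)),
      indicator_of_mem (mem_Ioi.2 hz), sub_add_sub_cancel]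
  · rw [truncPow, indicator_of_notMem (mem_Ioi.not.2 hz), indicator_of_notMem (mem_Ioi.not.2 hz),
      zero_mul]

/-- The convolution of `x₊ ^ γ` with the indicator of the unit interval, in closed form. It is the
kernel of a unit increment of fractional Brownian motion, with time measured backwards from the end
of the increment. -/
noncomputable def incrementKernel (γ z : ℝ) : ℝ :=
  (max z 0 ^ (γ + 1) - max (z - 1) 0 ^ (γ + 1)) / (γ + 1)

theorem lintegral_truncPow_sub {γ : ℝ} (hγ : -1 < γ) (z : ℝ) :
    ∫⁻ y in Ioc (0 : ℝ) 1, truncPow γ (z - y) = ENNReal.ofReal (incrementKernel γ z) := by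
  calc ∫⁻ y in Ioc (0 : ℝ) 1, truncPow γ (z - y)
      = ∫⁻ y, (Ioc (max (z - 1) 0) (max z 0)).indicator (fun x => ENNReal.ofReal (x ^ γ))
          (z - y) := by
        rw [setLIntegral_congr Ico_ae_eq_Ioc.symm, ← lintegral_indicator measurableSet_Ico]
        refine lintegral_congr fun y => ?_
        simp only [truncPow, indicator_apply, mem_Ioi, mem_Ioc, mem_Ico]
        grind
    _ = ∫⁻ x in Ioc (max (z - 1) 0) (max z 0), ENNReal.ofReal (x ^ γ) := by
        rw [lintegral_sub_left_eq_self, lintegral_indicator measurableSet_Ioc]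
    _ = ENNReal.ofReal (incrementKernel γ z) := by
        rw [lintegral_Ioc_ofReal (max_le_max_right 0 (by linarith)) (intervalIntegrable_rpow' hγ)
          fun x hx => Real.rpow_nonneg ((le_max_right _ _).trans hx.1.le) _,
          integral_rpow (Or.inl hγ), incrementKernel]

theorem lintegral_incrementKernel_sq {γ : ℝ} (hγ : -1 < γ) (hγ' : γ < -(1 / 2)) :
    ∫⁻ z, ENNReal.ofReal (incrementKernel γ z) ^ 2 =
      ENNReal.ofReal (beta (γ + 1) (-2 * γ - 1) / ((γ + 1) * (2 * γ + 3))) := by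
  have hB : 0 < beta (γ + 1) (-2 * γ - 1) := beta_pos (by linarith) (by linarith)
  calc ∫⁻ z, ENNReal.ofReal (incrementKernel γ z) ^ 2
      = ∫⁻ y in Ioc (0 : ℝ) 1, ∫⁻ x in Ioc (0 : ℝ) 1,
          ∫⁻ z, truncPow γ (z - y) * truncPow γ (z - x) := by
        simp_rw [← lintegral_truncPow_sub hγ]
        exact lintegral_sq_lintegral (by fun_prop)
    _ = ∫⁻ y in Ioc (0 : ℝ) 1, ∫⁻ x in Ioc (0 : ℝ) 1,
          ENNReal.ofReal (|y - x| ^ (2 * γ + 1)) *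
            ENNReal.ofReal (beta (γ + 1) (-2 * γ - 1)) := by
        refine lintegral_congr fun y => lintegral_congr_ae ?_
        filter_upwards [ae_restrict_of_ae (volume.ae_ne y)] with x hx
        rw [lintegral_truncPow_sub_mul_truncPow_sub hγ hγ' hx.symm, ENNReal.ofReal_mul' hB.le]
    _ = ENNReal.ofReal (2 / ((2 * γ + 2) * (2 * γ + 3))) *
          ENNReal.ofReal (beta (γ + 1) (-2 * γ - 1)) := by
        simp_rw [lintegral_mul_const' _ _ ENNReal.ofReal_ne_top]
        rw [lintegral_lintegral_abs_sub_rpow (by linarith) zero_le_one, sub_zero, Real.one_rpow,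
          mul_one, show 2 * γ + 1 + 1 = 2 * γ + 2 by ring, show 2 * γ + 1 + 2 = 2 * γ + 3 by ring]
    _ = ENNReal.ofReal (beta (γ + 1) (-2 * γ - 1) / ((γ + 1) * (2 * γ + 3))) := by
        rw [← ENNReal.ofReal_mul' hB.le, show 2 * γ + 2 = 2 * (γ + 1) by ring, mul_assoc,
          ← div_div, div_self two_ne_zero, one_div_mul_eq_div]

section PowerAverage

variable {E : Type*} [NormedAddCommGroup E] [NormedSpace ℝ E] {g : ℝ → E} {a : ℝ}

theorem rpow_le_half_rpow_neg_abs {x : ℝ} (a : ℝ) (hx : 1 / 2 ≤ x) (hx' : x ≤ 1) :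
    x ^ a ≤ (1 / 2) ^ (-|a|) :=
  (Real.rpow_le_rpow_of_exponent_ge (by linarith) hx' (neg_abs_le a)).trans
    (Real.rpow_le_rpow_of_nonpos (by norm_num) hx (neg_nonpos.2 (abs_nonneg a)))

theorem norm_one_sub_div_rpow_smul_le (a : ℝ) {T z : ℝ} (hz : z ∈ Ioc 0 (T / 2)) :
    ‖(1 - z / T) ^ a • g z‖ ≤ (1 / 2) ^ (-|a|) * ‖g z‖ := by
  have hT : 0 < T := by linarith [hz.1, hz.2]
  have hle : z / T ≤ 1 / 2 := by rw [div_le_iff₀ hT]; linarith [hz.2]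
  have hpos : 0 < z / T := div_pos hz.1 hT
  rw [norm_smul, Real.norm_of_nonneg (Real.rpow_nonneg (by linarith) a)]
  gcongr
  exact rpow_le_half_rpow_neg_abs a (by linarith) (by linarith)

theorem aestronglyMeasurable_one_sub_div_rpow_smul (a T : ℝ) {μ : Measure ℝ}
    (hg : AEStronglyMeasurable g μ) :
    AEStronglyMeasurable (fun z : ℝ => (1 - z / T) ^ a • g z) μ :=
  (by fun_prop : Measurable fun z : ℝ => (1 - z / T) ^ a).aestronglyMeasurable.smul hg

theorem tendsto_integral_one_sub_div_rpow_smul_left_half (a : ℝ) (hg : IntegrableOn g (Ioi 0)) :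
    Tendsto (fun T : ℝ => ∫ z in 0..(T / 2), (1 - z / T) ^ a • g z) atTop
      (𝓝 (∫ z in Ioi 0, g z)) := by
  have hlim : Tendsto (fun T : ℝ => ∫ z in Ioi 0,
      (Ioc 0 (T / 2)).indicator (fun z => (1 - z / T) ^ a • g z) z) atTop
      (𝓝 (∫ z in Ioi 0, g z)) := by
    refine tendsto_integral_filter_of_dominated_convergence (fun z => (1 / 2) ^ (-|a|) * ‖g z‖)
      (Eventually.of_forall fun T => (aestronglyMeasurable_one_sub_div_rpow_smul a T
        hg.aestronglyMeasurable).indicator measurableSet_Ioc)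
      (Eventually.of_forall fun T => ae_of_all _ fun z => ?_) (hg.norm.const_mul _) ?_
    · by_cases hz : z ∈ Ioc 0 (T / 2)
      · rw [indicator_of_mem hz]
        exact norm_one_sub_div_rpow_smul_le a hz
      · rw [indicator_of_notMem hz, norm_zero]
        positivity
    · filter_upwards [ae_restrict_mem measurableSet_Ioi] with z (hz : 0 < z)
      have hpow : Tendsto (fun T : ℝ => (1 - z / T) ^ a • g z) atTop
          (𝓝 (((1 : ℝ) - 0) ^ a • g z)) :=
        (((tendsto_const_nhds.div_atTop tendsto_id).const_sub 1).rpow_const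
          (Or.inl (by norm_num))).smul_const _
      rw [sub_zero, Real.one_rpow, one_smul] at hpow
      refine hpow.congr' ?_
      filter_upwards [eventually_ge_atTop (2 * z)] with T hT
      rw [indicator_of_mem (mem_Ioc.2 ⟨hz, by linarith⟩)]
  refine hlim.congr' ?_
  filter_upwards [eventually_gt_atTop 0] with T hT
  rw [setIntegral_indicator measurableSet_Ioc, inter_eq_self_of_subset_right fun z hz => hz.1,
    integral_of_le (by positivity)]

theorem eventually_norm_one_sub_div_rpow_smul_le (a : ℝ) (hdecay : g =o[atTop] fun z => z⁻¹)
    {c : ℝ} (hc : 0 < c) :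
    ∀ᶠ T in atTop, ∀ z ∈ Ioc (T / 2) T, ‖(1 - z / T) ^ a • g z‖ ≤ (1 - z / T) ^ a * (c / T) := by
  have hlarge := (tendsto_id.atTop_div_const two_pos).eventually
    (eventually_forall_ge_atTop.2 (hdecay.def (half_pos hc)))
  filter_upwards [hlarge, eventually_gt_atTop 0] with T hg hT z ⟨hTz, hzT⟩
  have hz : 0 < z := (half_pos hT).trans hTz
  have hnonneg : 0 ≤ (1 - z / T) ^ a :=
    Real.rpow_nonneg (sub_nonneg.2 ((div_le_one hT).2 hzT)) a
  rw [norm_smul, Real.norm_of_nonneg hnonneg]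
  gcongr
  calc ‖g z‖ ≤ c / 2 * ‖z⁻¹‖ := hg z hTz.le
    _ = c / (2 * z) := by rw [Real.norm_of_nonneg (by positivity)]; field_simp
    _ ≤ c / T := by gcongr; linarith

theorem intervalIntegrable_one_sub_div_rpow (ha : -1 < a) {T : ℝ} (hT : T ≠ 0) (x y : ℝ) :
    IntervalIntegrable (fun z : ℝ => (1 - z / T) ^ a) volume x y := by
  have h := ((intervalIntegrable_rpow' ha (a := 1 - x / T) (b := 1 - y / T)).comp_sub_left
    1).comp_mul_right (c := T⁻¹)
  simpa [hT, div_eq_mul_inv] using h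

theorem integral_one_sub_div_rpow_right_half (ha : -1 < a) {T : ℝ} (hT : T ≠ 0) :
    ∫ z in (T / 2)..T, (1 - z / T) ^ a = T * ((1 / 2) ^ (a + 1) / (a + 1)) := by
  rw [integral_comp_sub_div (fun x : ℝ => x ^ a) hT, integral_rpow (Or.inl ha), div_self hT,
    sub_self, Real.zero_rpow (by linarith), show 1 - T / 2 / T = 1 / 2 by field_simp; norm_num,
    sub_zero, smul_eq_mul]

theorem tendsto_integral_one_sub_div_rpow_smul_right_half (ha : -1 < a)
    (hdecay : g =o[atTop] fun z => z⁻¹) :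
    Tendsto (fun T : ℝ => ∫ z in (T / 2)..T, (1 - z / T) ^ a • g z) atTop (𝓝 0) := by
  set C : ℝ := (1 / 2) ^ (a + 1) / (a + 1) with hC
  have hCpos : 0 < C := div_pos (by positivity) (by linarith)
  rw [← isLittleO_one_iff ℝ, isLittleO_iff]
  intro ε hε
  filter_upwards [eventually_norm_one_sub_div_rpow_smul_le a hdecay (div_pos hε hCpos),
    eventually_gt_atTop 0] with T hbound hT
  calc ‖∫ z in (T / 2)..T, (1 - z / T) ^ a • g z‖
      ≤ ∫ z in (T / 2)..T, (1 - z / T) ^ a * (ε / C / T) :=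
        norm_integral_le_of_norm_le (by linarith) (ae_of_all _ hbound)
          ((intervalIntegrable_one_sub_div_rpow ha hT.ne' _ _).mul_const _)
    _ = ε * ‖(1 : ℝ)‖ := by
        rw [intervalIntegral.integral_mul_const, integral_one_sub_div_rpow_right_half ha hT.ne',
          ← hC, norm_one]
        field_simp

theorem intervalIntegrable_one_sub_div_rpow_smul_left_half (a : ℝ) (hg : IntegrableOn g (Ioi 0))
    {T : ℝ} (hT : 0 ≤ T) :
    IntervalIntegrable (fun z : ℝ => (1 - z / T) ^ a • g z) volume 0 (T / 2) := by
  have hg' : IntegrableOn g (Ioc 0 (T / 2)) := hg.mono_set Ioc_subset_Ioi_self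
  rw [intervalIntegrable_iff_integrableOn_Ioc_of_le (by positivity)]
  exact (hg'.norm.const_mul _).mono'
    (aestronglyMeasurable_one_sub_div_rpow_smul a T hg'.aestronglyMeasurable)
    ((ae_restrict_mem measurableSet_Ioc).mono fun z => norm_one_sub_div_rpow_smul_le a)

theorem eventually_intervalIntegrable_one_sub_div_rpow_smul_right_half (ha : -1 < a)
    (hg : IntegrableOn g (Ioi 0)) (hdecay : g =o[atTop] fun z => z⁻¹) :
    ∀ᶠ T in atTop, IntervalIntegrable (fun z : ℝ => (1 - z / T) ^ a • g z) volume (T / 2) T := by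
  filter_upwards [eventually_norm_one_sub_div_rpow_smul_le a hdecay one_pos,
    eventually_gt_atTop 0] with T hbound hT
  have hg' : IntegrableOn g (Ioc (T / 2) T) :=
    hg.mono_set fun z hz => (half_pos hT).trans hz.1
  have hT₂ : T / 2 ≤ T := half_le_self hT.le
  have hweight := (intervalIntegrable_iff_integrableOn_Ioc_of_le hT₂).1
    ((intervalIntegrable_one_sub_div_rpow ha hT.ne' (T / 2) T).mul_const (1 / T))
  rw [intervalIntegrable_iff_integrableOn_Ioc_of_le hT₂]
  exact hweight.mono' (aestronglyMeasurable_one_sub_div_rpow_smul a T hg'.aestronglyMeasurable)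
    ((ae_restrict_mem measurableSet_Ioc).mono hbound)

/- Half of the range is handled by dominated convergence. On the other half `(1 - z / T) ^ a` may be
unbounded, but its integral is of order `T` while `g` is uniformly `o(1 / T)`. -/
theorem tendsto_integral_one_sub_div_rpow_smul (ha : -1 < a) (hg : IntegrableOn g (Ioi 0))
    (hdecay : g =o[atTop] fun z => z⁻¹) :
    Tendsto (fun T : ℝ => ∫ z in 0..T, (1 - z / T) ^ a • g z) atTop (𝓝 (∫ z in Ioi 0, g z)) := by
  have h := (tendsto_integral_one_sub_div_rpow_smul_left_half a hg).add
    (tendsto_integral_one_sub_div_rpow_smul_right_half ha hdecay)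
  rw [add_zero] at h
  refine h.congr' ?_
  filter_upwards [eventually_intervalIntegrable_one_sub_div_rpow_smul_right_half ha hg hdecay,
    eventually_ge_atTop 0] with T hright hT
  exact integral_add_adjacent_intervals
    (intervalIntegrable_one_sub_div_rpow_smul_left_half a hg hT) hright

theorem tendsto_rpow_neg_smul_integral_rpow_smul_comp_sub (ha : -1 < a)
    (hg : IntegrableOn g (Ioi 0)) (hdecay : g =o[atTop] fun z => z⁻¹) :
    Tendsto (fun T : ℝ => T ^ (-a) • ∫ s in 0..T, s ^ a • g (T - s)) atTop
      (𝓝 (∫ z in Ioi 0, g z)) := by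
  refine (tendsto_integral_one_sub_div_rpow_smul ha hg hdecay).congr' ?_
  filter_upwards [eventually_gt_atTop 0] with T hT
  have hreflect := integral_comp_sub_left (fun s => s ^ a • g (T - s)) T (a := 0) (b := T)
  rw [sub_self, sub_zero] at hreflect
  rw [← hreflect, ← intervalIntegral.integral_smul]
  refine integral_congr fun z hz => ?_
  rw [uIcc_of_le hT.le] at hz
  rw [sub_sub_cancel, smul_smul, one_sub_div hT.ne', Real.div_rpow (sub_nonneg.2 hz.2) hT.le,
    Real.rpow_neg hT.le, div_eq_inv_mul]

end PowerAverage

theorem continuous_incrementKernel {γ : ℝ} (hγ : -1 < γ) : Continuous (incrementKernel γ) := by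
  have hγ₁ : 0 ≤ γ + 1 := by linarith
  have hpow {f : ℝ → ℝ} (hf : Continuous f) : Continuous fun z => max (f z) 0 ^ (γ + 1) :=
    (hf.max continuous_const).rpow_const fun _ => Or.inr hγ₁
  exact ((hpow continuous_id).sub (hpow (continuous_sub_right 1))).div_const _

theorem incrementKernel_nonneg {γ : ℝ} (hγ : -1 < γ) (z : ℝ) : 0 ≤ incrementKernel γ z :=
  div_nonneg (sub_nonneg.2 (Real.rpow_le_rpow (le_max_right _ _)
    (max_le_max_right 0 (by linarith)) (by linarith))) (by linarith)

theorem incrementKernel_of_nonpos (γ : ℝ) {z : ℝ} (hz : z ≤ 0) : incrementKernel γ z = 0 := by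
  rw [incrementKernel, max_eq_right hz, max_eq_right (by linarith), sub_self, zero_div]

theorem incrementKernel_le_rpow {γ z : ℝ} (hγ : -1 < γ) (hγ' : γ ≤ 0) (hz : 1 < z) :
    incrementKernel γ z ≤ (z - 1) ^ γ := by
  have hz' := sub_pos.2 hz
  rw [incrementKernel, max_eq_left (by linarith), max_eq_left hz'.le, ← integral_rpow (Or.inl hγ)]
  calc ∫ x in (z - 1)..z, x ^ γ
      ≤ ∫ _ in (z - 1)..z, (z - 1) ^ γ :=
        integral_mono_on (by linarith) (intervalIntegrable_rpow' hγ) intervalIntegrable_const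
          fun x hx => Real.rpow_le_rpow_of_nonpos hz' hx.1 hγ'
    _ = (z - 1) ^ γ := by simp

theorem isLittleO_incrementKernel_sq {γ : ℝ} (hγ : -1 < γ) (hγ' : γ < -(1 / 2)) :
    (fun z => incrementKernel γ z ^ 2) =o[atTop] fun z => z⁻¹ := by
  have hlim : Tendsto (fun z : ℝ => (1 / 2 : ℝ) ^ (2 * γ) * z ^ (2 * γ + 1)) atTop (𝓝 0) := by
    simpa using (tendsto_rpow_neg_atTop (y := -(2 * γ + 1)) (by linarith)).const_mul
      ((1 / 2 : ℝ) ^ (2 * γ))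
  rw [isLittleO_iff_tendsto' ((eventually_gt_atTop 0).mono fun z hz h =>
    absurd h (inv_pos.2 hz).ne')]
  refine squeeze_zero' ?_ ?_ hlim
  · filter_upwards [eventually_gt_atTop 0] with z hz
    positivity
  · filter_upwards [eventually_ge_atTop 2] with z hz
    have hz₀ : 0 < z := by linarith
    have hle : incrementKernel γ z ≤ (1 / 2 * z) ^ γ :=
      (incrementKernel_le_rpow hγ (by linarith) (by linarith)).trans
        (Real.rpow_le_rpow_of_nonpos (by linarith) (by linarith) (by linarith))
    calc incrementKernel γ z ^ 2 / z⁻¹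
        ≤ ((1 / 2 * z) ^ γ) ^ 2 / z⁻¹ := by
          gcongr
          exact incrementKernel_nonneg hγ z
      _ = (1 / 2) ^ (2 * γ) * z ^ (2 * γ + 1) := by
          rw [Real.mul_rpow (by norm_num) hz₀.le, mul_pow, ← Real.rpow_mul_natCast (by norm_num),
            ← Real.rpow_mul_natCast hz₀.le, Real.rpow_add_one hz₀.ne', div_inv_eq_mul, mul_assoc,
            Nat.cast_ofNat, mul_comm γ]

theorem integrable_incrementKernel_sq {γ : ℝ} (hγ : -1 < γ) (hγ' : γ < -(1 / 2)) :
    Integrable fun z => incrementKernel γ z ^ 2 := by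
  refine ⟨((continuous_incrementKernel hγ).pow 2).aestronglyMeasurable, ?_⟩
  rw [hasFiniteIntegral_iff_ofReal (ae_of_all _ fun z => sq_nonneg _)]
  simp_rw [ENNReal.ofReal_pow (incrementKernel_nonneg hγ _)]
  rw [lintegral_incrementKernel_sq hγ hγ']
  exact ENNReal.ofReal_lt_top

theorem integral_Ioi_incrementKernel_sq {γ : ℝ} (hγ : -1 < γ) (hγ' : γ < -(1 / 2)) :
    ∫ z in Ioi 0, incrementKernel γ z ^ 2 =
      beta (γ + 1) (-2 * γ - 1) / ((γ + 1) * (2 * γ + 3)) := by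
  have hB : 0 < beta (γ + 1) (-2 * γ - 1) := beta_pos (by linarith) (by linarith)
  have hzero : ∀ z ∉ Ioi (0 : ℝ), incrementKernel γ z ^ 2 = 0 := fun z hz => by
    rw [incrementKernel_of_nonpos γ (not_lt.1 hz), zero_pow two_ne_zero]
  rw [setIntegral_eq_integral_of_forall_compl_eq_zero hzero,
    integral_eq_lintegral_of_nonneg_ae (ae_of_all _ fun z => sq_nonneg _)
      ((continuous_incrementKernel hγ).pow 2).aestronglyMeasurable]
  simp_rw [ENNReal.ofReal_pow (incrementKernel_nonneg hγ _)]
  rw [lintegral_incrementKernel_sq hγ hγ', ENNReal.toReal_ofReal]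
  exact div_nonneg hB.le (mul_nonneg (by linarith) (by linarith))

theorem integral_max_sub_rpow {γ s t : ℝ} (hγ : -1 < γ) (hs : s ≤ t + 1) :
    ∫ u in (max s t)..(t + 1), (u - s) ^ γ = incrementKernel γ (t + 1 - s) := by
  rw [integral_sub_rpow hγ, incrementKernel, max_eq_left (sub_nonneg.2 hs), ← max_sub_sub_right,
    sub_self, max_comm, add_sub_right_comm, add_sub_cancel_right]

theorem integral_mem_Icc_mul_integral {f k : ℝ → ℝ} {a b m M : ℝ} (hab : a ≤ b)
    (hf : AEStronglyMeasurable f (volume.restrict (Ioc a b)))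
    (hk : IntervalIntegrable k volume a b)
    (hfk : ∀ x ∈ Icc a b, f x ∈ Icc (m * k x) (M * k x)) :
    ∫ x in a..b, f x ∈ Icc (m * ∫ x in a..b, k x) (M * ∫ x in a..b, k x) := by
  have hf_int : IntervalIntegrable f volume a b := by
    refine (hk.norm.const_mul (max |m| |M|)).mono_fun' ?_ ?_ <;> rw [uIoc_of_le hab]
    · exact hf
    · filter_upwards [ae_restrict_mem measurableSet_Ioc] with x hx
      have hx' := hfk x (Ioc_subset_Icc_self hx)
      rw [max_mul_of_nonneg _ _ (norm_nonneg _), Real.norm_eq_abs, Real.norm_eq_abs, ← abs_mul,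
        ← abs_mul]
      exact abs_le_max_abs_abs hx'.1 hx'.2
  rw [← intervalIntegral.integral_const_mul, ← intervalIntegral.integral_const_mul]
  exact ⟨integral_mono_on hab (hk.const_mul m) hf_int fun x hx => (hfk x hx).1,
    integral_mono_on hab hf_int (hk.const_mul M) fun x hx => (hfk x hx).2⟩

theorem rpow_mem_uIcc {a b u : ℝ} (β : ℝ) (ha : 0 < a) (hu : u ∈ Icc a b) :
    u ^ β ∈ uIcc (a ^ β) (b ^ β) := by
  have hu₀ := ha.trans_le hu.1
  rcases le_total 0 β with hβ | hβ
  · exact mem_uIcc.2 (Or.inl ⟨Real.rpow_le_rpow ha.le hu.1 hβ, Real.rpow_le_rpow hu₀.le hu.2 hβ⟩)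
  · exact mem_uIcc.2 (Or.inr ⟨Real.rpow_le_rpow_of_nonpos hu₀ hu.2 hβ,
      Real.rpow_le_rpow_of_nonpos ha hu.1 hβ⟩)

theorem stronglyMeasurable_integral_Ioc {X E : Type*} [MeasurableSpace X] [NormedAddCommGroup E]
    [NormedSpace ℝ E] {μ : Measure ℝ} [SFinite μ] {l r : X → ℝ} {f : X → ℝ → E}
    (hl : Measurable l) (hr : Measurable r) (hf : StronglyMeasurable (Function.uncurry f)) :
    StronglyMeasurable fun x => ∫ u in Ioc (l x) (r x), f x u ∂μ := by
  have hset : MeasurableSet {p : X × ℝ | l p.1 < p.2 ∧ p.2 ≤ r p.1} :=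
    (measurableSet_lt (hl.comp measurable_fst) measurable_snd).inter
      (measurableSet_le measurable_snd (hr.comp measurable_fst))
  simp_rw [← MeasureTheory.integral_indicator measurableSet_Ioc]
  exact (hf.indicator hset).integral_prod_right'

/-- The kernel increment `∫_{max(s,t)}^{t+1} u^β (u-s)^γ du`, so that
`X_{t+1} - X_t = ∫₀^{t+1} s^α (kernelIncrement β γ t s) dW_s`. -/
noncomputable def kernelIncrement (β γ t s : ℝ) : ℝ :=
  ∫ u in (max s t)..(t + 1), u ^ β * (u - s) ^ γ

/-- The incremental variance `V(t) = E(X_{t+1} - X_t)²`. -/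
noncomputable def incrementVariance (α β γ t : ℝ) : ℝ :=
  ∫ s in 0..(t + 1), s ^ (2 * α) * kernelIncrement β γ t s ^ 2

theorem aestronglyMeasurable_kernelIncrement (β γ t : ℝ) :
    AEStronglyMeasurable (kernelIncrement β γ t) (volume.restrict (Ioc 0 (t + 1))) := by
  have hmeas : StronglyMeasurable fun s : ℝ =>
      ∫ u in Ioc (max s t) (t + 1), u ^ β * (u - s) ^ γ :=
    stronglyMeasurable_integral_Ioc (by fun_prop) measurable_const
      (Measurable.stronglyMeasurable (by fun_prop))
  refine hmeas.aestronglyMeasurable.congr ?_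
  filter_upwards [ae_restrict_mem measurableSet_Ioc] with s hs
  rw [kernelIncrement, integral_of_le (max_le hs.2 (by linarith))]

theorem kernelIncrement_mem_Icc {γ s t : ℝ} (β : ℝ) (hγ : -1 < γ) (ht : 0 < t)
    (hs : s ≤ t + 1) :
    kernelIncrement β γ t s ∈
      Icc (min (t ^ β) ((t + 1) ^ β) * incrementKernel γ (t + 1 - s))
        (max (t ^ β) ((t + 1) ^ β) * incrementKernel γ (t + 1 - s)) := by
  rw [← integral_max_sub_rpow hγ hs]
  refine integral_mem_Icc_mul_integral (max_le hs (by linarith))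
    (Measurable.aestronglyMeasurable (by fun_prop)) (intervalIntegrable_sub_rpow hγ _ _ _)
    fun u hu => ?_
  have hpow := rpow_mem_uIcc β ht ⟨(le_max_right s t).trans hu.1, hu.2⟩
  have hnonneg : 0 ≤ (u - s) ^ γ :=
    Real.rpow_nonneg (sub_nonneg.2 ((le_max_left s t).trans hu.1)) γ
  exact ⟨mul_le_mul_of_nonneg_right hpow.1 hnonneg, mul_le_mul_of_nonneg_right hpow.2 hnonneg⟩

theorem intervalIntegrable_rpow_mul_incrementKernel_sq {a γ : ℝ} (ha : -1 < a) (hγ : -1 < γ)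
    (T x y : ℝ) :
    IntervalIntegrable (fun s : ℝ => s ^ a * incrementKernel γ (T - s) ^ 2) volume x y :=
  (intervalIntegrable_rpow' ha).mul_continuousOn
    (((continuous_incrementKernel hγ).comp (continuous_sub_left T)).pow 2).continuousOn

theorem incrementVariance_mem_Icc {α γ t : ℝ} (β : ℝ) (hα : -(1 / 2) < α) (hγ : -1 < γ)
    (ht : 0 < t) :
    incrementVariance α β γ t ∈
      Icc (min (t ^ β) ((t + 1) ^ β) ^ 2 *
          ∫ s in 0..(t + 1), s ^ (2 * α) * incrementKernel γ (t + 1 - s) ^ 2)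
        (max (t ^ β) ((t + 1) ^ β) ^ 2 *
          ∫ s in 0..(t + 1), s ^ (2 * α) * incrementKernel γ (t + 1 - s) ^ 2) := by
  refine integral_mem_Icc_mul_integral (by linarith) ?_
    (intervalIntegrable_rpow_mul_incrementKernel_sq (by linarith) hγ _ _ _) fun s hs => ?_
  · exact (Measurable.aestronglyMeasurable (by fun_prop)).mul
      ((aestronglyMeasurable_kernelIncrement β γ t).pow 2)
  · have hK := incrementKernel_nonneg hγ (t + 1 - s)
    have hmin : 0 ≤ min (t ^ β) ((t + 1) ^ β) := by positivity
    obtain ⟨hlower, hupper⟩ := kernelIncrement_mem_Icc β hγ ht hs.2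
    have hinc := (mul_nonneg hmin hK).trans hlower
    have hpow : 0 ≤ s ^ (2 * α) := Real.rpow_nonneg hs.1 _
    rw [mul_left_comm, mul_left_comm (max _ _ ^ 2), ← mul_pow, ← mul_pow]
    constructor <;> gcongr

theorem incrementVariance_div_rpow_mem_Icc {α γ t : ℝ} (β : ℝ) (hα : -(1 / 2) < α) (hγ : -1 < γ)
    (ht : 0 < t) :
    incrementVariance α β γ t / t ^ (2 * α + 2 * β) ∈
      Icc (min 1 (((t + 1) / t) ^ β) ^ 2 *
          ((∫ s in 0..(t + 1), s ^ (2 * α) * incrementKernel γ (t + 1 - s) ^ 2) / t ^ (2 * α)))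
        (max 1 (((t + 1) / t) ^ β) ^ 2 *
          ((∫ s in 0..(t + 1), s ^ (2 * α) * incrementKernel γ (t + 1 - s) ^ 2) /
            t ^ (2 * α))) := by
  have htβ : 0 < t ^ β := by positivity
  have hsplit : t ^ (2 * α + 2 * β) = (t ^ β) ^ 2 * t ^ (2 * α) := by
    rw [add_comm, Real.rpow_add ht, mul_comm 2 β, Real.rpow_mul ht.le, Real.rpow_two]
  have hmin : min 1 (((t + 1) / t) ^ β) = min (t ^ β) ((t + 1) ^ β) / t ^ β := by
    rw [Real.div_rpow (by linarith) ht.le, ← min_div_div_right htβ.le, div_self htβ.ne']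
  have hmax : max 1 (((t + 1) / t) ^ β) = max (t ^ β) ((t + 1) ^ β) / t ^ β := by
    rw [Real.div_rpow (by linarith) ht.le, ← max_div_div_right htβ.le, div_self htβ.ne']
  have hbounds := incrementVariance_mem_Icc β hα hγ ht
  rw [hmin, hmax, div_pow, div_pow, div_mul_div_comm, div_mul_div_comm, hsplit]
  exact ⟨by gcongr; exact hbounds.1, by gcongr; exact hbounds.2⟩

theorem tendsto_add_one_div_rpow (c : ℝ) :
    Tendsto (fun t : ℝ => ((t + 1) / t) ^ c) atTop (𝓝 1) := by
  have hratio : Tendsto (fun t : ℝ => 1 + 1 / t) atTop (𝓝 (1 + 0)) :=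
    (tendsto_const_nhds.div_atTop tendsto_id).const_add 1
  rw [add_zero] at hratio
  have hpow := hratio.rpow_const (p := c) (Or.inl one_ne_zero)
  rw [Real.one_rpow] at hpow
  refine hpow.congr' ?_
  filter_upwards [eventually_ne_atTop 0] with t ht
  rw [add_div, div_self ht]

theorem tendsto_integral_rpow_mul_incrementKernel_sq_div_rpow {a γ : ℝ} (ha : -1 < a)
    (hγ : -1 < γ) (hγ' : γ < -(1 / 2)) :
    Tendsto (fun t : ℝ =>
        (∫ s in 0..(t + 1), s ^ a * incrementKernel γ (t + 1 - s) ^ 2) / t ^ a) atTop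
      (𝓝 (∫ z in Ioi 0, incrementKernel γ z ^ 2)) := by
  have hconv := (tendsto_rpow_neg_smul_integral_rpow_smul_comp_sub ha
    (integrable_incrementKernel_sq hγ hγ').integrableOn
    (isLittleO_incrementKernel_sq hγ hγ')).comp (tendsto_atTop_add_const_right _ (1 : ℝ) tendsto_id)
  have h := hconv.mul (tendsto_add_one_div_rpow a)
  rw [mul_one] at h
  refine h.congr' ?_
  filter_upwards [eventually_gt_atTop 0] with t ht
  have ht₁ : 0 < t + 1 := by linarith
  simp only [Function.comp_apply, id_eq, smul_eq_mul]
  rw [Real.div_rpow ht₁.le ht.le, Real.rpow_neg ht₁.le]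
  field_simp

end VolterraIncrement

open VolterraIncrement in
theorem stmt_4_general {α β γ : ℝ} (hα : -(1 / 2) < α) (hγ : -1 < γ) (hγ' : γ < -(1 / 2)) :
    Tendsto (fun t : ℝ => incrementVariance α β γ t / t ^ (2 * α + 2 * β)) atTop
      (nhds (Real.Gamma (γ + 1) * Real.Gamma (-2 * γ - 1) / Real.Gamma (-γ) /
        ((γ + 1) * (2 * γ + 3)))) := by
  have hmain := tendsto_integral_rpow_mul_incrementKernel_sq_div_rpow (a := 2 * α)
    (by linarith) hγ hγ'
  rw [integral_Ioi_incrementKernel_sq hγ hγ', ProbabilityTheory.beta,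
    show γ + 1 + (-2 * γ - 1) = -γ by ring] at hmain
  have hratio := tendsto_add_one_div_rpow β
  have hlower := (((tendsto_const_nhds (x := (1 : ℝ))).min hratio).pow 2).mul hmain
  have hupper := (((tendsto_const_nhds (x := (1 : ℝ))).max hratio).pow 2).mul hmain
  rw [min_self, one_pow, one_mul] at hlower
  rw [max_self, one_pow, one_mul] at hupper
  have hsqueeze := (eventually_gt_atTop 0).mono fun t =>
    incrementVariance_div_rpow_mem_Icc β hα hγ
  exact tendsto_of_tendsto_of_tendsto_of_le_of_le' hlower hupper
    (hsqueeze.mono fun _ => And.left) (hsqueeze.mono fun _ => And.right)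

/-- Lemma 3.4, case `γ < -1/2`: asymptotics of the incremental variance
`E(X_{t+1} - X_t)²` of the Gaussian Volterra process. -/
theorem stmt_4 (α β γ : ℝ) (hα : -(1/2 : ℝ) < α) (hγ : -1 < γ)
    (hαβγ : -(3/2 : ℝ) < α + β + γ) (hγ' : γ < -(1/2 : ℝ))
    (V : ℝ → ℝ)
    (hV : ∀ t : ℝ, V t = ∫ s in (0:ℝ)..(t+1), s ^ (2*α) *
      (∫ u in (max s t)..(t+1), u ^ β * (u - s) ^ γ) ^ 2) :
    Tendsto (fun t : ℝ => V t / t ^ (2*α+2*β)) atTop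
      (nhds (Real.Gamma (γ+1) * Real.Gamma (-2*γ-1) / Real.Gamma (-γ)
        / ((γ+1) * (2*γ+3)))) := by
  obtain rfl : V = VolterraIncrement.incrementVariance α β γ := funext hV
  exact stmt_4_general hα hγ hγ'
end

section
/- Let α, β, γ be real numbers with α > -1/2, α + β + γ > -3/2, and γ = −1/2. For t ≥ 0 define V(t) = ∫₀^{t+1} s^{2α} (∫_{max(s,t)}^{t+1} u^β (u−s)^{−1/2} du)² ds. Then lim_{t→+∞} V(t) / (t^{2α+2β} log t) = 1. -/
open MeasureTheory Filter intervalIntegral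

/-!
On the window `t ≤ u ≤ t + 1` the weight `u ^ β` is asymptotically the constant `t ^ β`, so that the
variance is equivalent to `t ^ (2β)` times the variance for `β = 0`. For `β = 0` and `γ = -1/2` the
inner integral is explicit and its square is a function `g` of `t + 1 - s` only, with
`1 / y ≤ g y ≤ 1 / (y - 1)` for `y > 1`. With `T = t + 1` the variance is then
`∫₀ᵀ s ^ (2α) * g (T - s) ds`. Since `y * g y` is bounded, replacing `s ^ (2α)` by its value at the
singularity `s = T` of `1 / (T - s)` costs only `O(T ^ (2α))`, while `∫₀ᵀ g ~ log T`.
-/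

open Set Asymptotics

section Integrals

lemma norm_integral_sub_integral_le {E : Type*} [NormedAddCommGroup E] [NormedSpace ℝ E]
    {μ : Measure ℝ} {a b : ℝ} {f g : ℝ → E} {h : ℝ → ℝ} (hab : a ≤ b)
    (hf : AEStronglyMeasurable f (μ.restrict (Ioc a b))) (hg : IntervalIntegrable g μ a b)
    (hh : IntervalIntegrable h μ a b) (hle : ∀ x ∈ Ioc a b, ‖f x - g x‖ ≤ h x) :
    ‖(∫ x in a..b, f x ∂μ) - ∫ x in a..b, g x ∂μ‖ ≤ ∫ x in a..b, h x ∂μ := by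
  have hsub : IntervalIntegrable (fun x ↦ f x - g x) μ a b := by
    refine hh.mono_fun' ?_ ?_ <;> rw [uIoc_of_le hab]
    · exact hf.sub hg.1.aestronglyMeasurable
    · exact (ae_restrict_iff' measurableSet_Ioc).2 (ae_of_all _ hle)
  have hfi : IntervalIntegrable f μ a b := by simpa using hsub.add hg
  rw [← integral_sub hfi hg]
  exact norm_integral_le_of_norm_le hab (ae_of_all _ hle) hh

lemma measurable_intervalIntegral {f : ℝ × ℝ → ℝ} {a b : ℝ → ℝ} (hf : Measurable f)
    (ha : Measurable a) (hb : Measurable b) :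
    Measurable fun s ↦ ∫ u in a s..b s, f (s, u) := by
  have hIoc : ∀ {c d : ℝ → ℝ}, Measurable c → Measurable d →
      Measurable fun s ↦ ∫ u in Ioc (c s) (d s), f (s, u) := fun {c d} hc hd ↦ by
    have hset : MeasurableSet {p : ℝ × ℝ | p.2 ∈ Ioc (c p.1) (d p.1)} :=
      (measurableSet_lt (hc.comp measurable_fst) measurable_snd).inter
        (measurableSet_le measurable_snd (hd.comp measurable_fst))
    simp only [← MeasureTheory.integral_indicator measurableSet_Ioc]
    exact (hf.indicator hset).stronglyMeasurable.integral_prod_right'.measurable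
  exact (hIoc ha hb).sub (hIoc hb ha)

end Integrals

section Rpow

lemma abs_rpow_sub_one_le {x : ℝ} (hx : 1 ≤ x) (b : ℝ) : |x ^ b - 1| ≤ x ^ |b| - 1 := by
  rcases le_total 0 b with hb | hb
  · rw [abs_of_nonneg hb, abs_of_nonneg (sub_nonneg.2 (Real.one_le_rpow hx hb))]
  · have hle : x ^ b ≤ 1 := Real.rpow_le_one_of_one_le_of_nonpos hx hb
    have hge : 1 ≤ x ^ (-b) := Real.one_le_rpow hx (by linarith)
    have hmul : x ^ b * x ^ (-b) = 1 := by
      rw [← Real.rpow_add (by linarith), add_neg_cancel, Real.rpow_zero]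
    rw [abs_of_nonpos hb, abs_of_nonpos (by linarith)]
    calc -(x ^ b - 1) = x ^ b * (x ^ (-b) - 1) := by linear_combination -hmul
      _ ≤ x ^ (-b) - 1 := mul_le_of_le_one_left (sub_nonneg.2 hge) hle

lemma abs_rpow_sub_rpow_le {t u v : ℝ} (ht : 0 < t) (hu : u ∈ Icc t v) (b : ℝ) :
    |u ^ b - t ^ b| ≤ ((v / t) ^ |b| - 1) * t ^ b := by
  have htb : 0 < t ^ b := Real.rpow_pos_of_pos ht b
  have hx : 1 ≤ u / t := (one_le_div ht).2 hu.1
  calc |u ^ b - t ^ b| = |(u / t) ^ b - 1| * t ^ b := by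
        rw [Real.div_rpow (ht.le.trans hu.1) ht.le, div_sub_one htb.ne', abs_div, abs_of_pos htb,
          div_mul_cancel₀ _ htb.ne']
    _ ≤ ((u / t) ^ |b| - 1) * t ^ b := by gcongr; exact abs_rpow_sub_one_le hx b
    _ ≤ ((v / t) ^ |b| - 1) * t ^ b := by gcongr; exact hu.2

lemma tendsto_add_const_div_self_rpow (c p : ℝ) :
    Tendsto (fun t : ℝ ↦ ((t + c) / t) ^ p) atTop (nhds 1) := by
  have hbase : Tendsto (fun t : ℝ ↦ (t + c) / t) atTop (nhds 1) :=
    (isEquivalent_iff_tendsto_one (eventually_ne_atTop 0)).1 <|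
      IsEquivalent.refl.add_const_of_norm_tendsto_atTop tendsto_norm_atTop_atTop
  simpa using hbase.rpow_const (.inl one_ne_zero)

lemma isEquivalent_add_const_rpow (c p : ℝ) :
    (fun t : ℝ ↦ (t + c) ^ p) ~[atTop] fun t ↦ t ^ p := by
  refine isEquivalent_of_tendsto_one ((tendsto_add_const_div_self_rpow c p).congr' ?_)
  filter_upwards [eventually_ge_atTop 0, eventually_ge_atTop (-c)] with t ht htc
  exact Real.div_rpow (by linarith) ht p

end Rpow

section PowerConvolution

variable {a B T : ℝ} {g : ℝ → ℝ}

lemma intervalIntegrable_dslope_rpow (ha : -1 < a) :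
    IntervalIntegrable (dslope (· ^ a) 1) volume 0 1 := by
  have hleft : IntervalIntegrable (dslope (· ^ a) 1) volume 0 (1 / 2) := by
    have hinv : ContinuousOn (fun x : ℝ ↦ (x - 1)⁻¹) (uIcc 0 (1 / 2)) := by
      refine ContinuousOn.inv₀ (by fun_prop) fun x hx ↦ ?_
      rw [uIcc_of_le (by norm_num)] at hx
      linarith [hx.2]
    have hslope := ((intervalIntegrable_rpow' ha).sub
      (intervalIntegrable_const (c := (1 : ℝ) ^ a))).continuousOn_mul hinv
    refine hslope.congr fun x hx ↦ ?_
    rw [uIoc_of_le (by norm_num)] at hx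
    rw [dslope_of_ne _ (by linarith [hx.2]), slope_def_module, smul_eq_mul]
  have hright : ContinuousOn (dslope (· ^ a) (1 : ℝ)) (Ioi 0) :=
    (continuousOn_dslope (Ioi_mem_nhds one_pos)).2
      ⟨continuousOn_id.rpow_const fun x hx ↦ .inl (ne_of_gt hx),
        Real.differentiableAt_rpow_const_of_ne a one_ne_zero⟩
  refine hleft.trans (hright.mono fun x hx ↦ ?_).intervalIntegrable
  rw [uIcc_of_le (by norm_num)] at hx
  exact lt_of_lt_of_le (by norm_num) hx.1

lemma rpow_sub_rpow_eq_dslope {s : ℝ} (hs : 0 ≤ s) (hT : 0 < T) :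
    s ^ a - T ^ a = -(T ^ a / T * dslope (· ^ a) 1 (s / T) * (T - s)) := by
  have h := sub_smul_dslope (· ^ a) 1 (s / T)
  rw [smul_eq_mul, Real.one_rpow, Real.div_rpow hs hT.le] at h
  calc s ^ a - T ^ a = T ^ a * (s ^ a / T ^ a - 1) := by
        have := (Real.rpow_pos_of_pos hT a).ne'
        field_simp
    _ = _ := by
        rw [← h]
        field_simp
        ring

theorem abs_integral_rpow_mul_comp_sub_sub_le (ha : -1 < a) (hT : 0 < T)
    (hg : IntervalIntegrable g volume 0 T) (hB : ∀ y ∈ Ico 0 T, |y * g y| ≤ B) :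
    |(∫ s in 0..T, s ^ a * g (T - s)) - T ^ a * ∫ y in 0..T, g y| ≤
      (B * ∫ x in 0..1, |dslope (· ^ a) 1 x|) * T ^ a := by
  have hTa : 0 < T ^ a := Real.rpow_pos_of_pos hT a
  have hgT : IntervalIntegrable (fun s ↦ g (T - s)) volume 0 T := by
    simpa using (hg.comp_sub_left T).symm
  have hdslope : IntervalIntegrable (fun s ↦ |dslope (· ^ a) 1 (s / T)|) volume 0 T := by
    have h := IntervalIntegrable.comp_mul_right (intervalIntegrable_dslope_rpow ha) (c := T⁻¹)
    simpa [div_eq_mul_inv] using h.abs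
  have hbound : ∀ s ∈ Ioc 0 T, ‖s ^ a * g (T - s) - T ^ a * g (T - s)‖ ≤
      B * (T ^ a / T) * |dslope (· ^ a) 1 (s / T)| := fun s hs ↦
    calc ‖s ^ a * g (T - s) - T ^ a * g (T - s)‖
        = |(T - s) * g (T - s)| * (T ^ a / T * |dslope (· ^ a) 1 (s / T)|) := by
          rw [← sub_mul, rpow_sub_rpow_eq_dslope hs.1.le hT, Real.norm_eq_abs,
            ← abs_of_pos (div_pos hTa hT), ← abs_mul, ← abs_mul, ← abs_neg,
            abs_of_pos (div_pos hTa hT)]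
          ring_nf
      _ ≤ B * (T ^ a / T * |dslope (· ^ a) 1 (s / T)|) := by
          gcongr
          exact hB _ ⟨sub_nonneg.2 hs.2, sub_lt_self T hs.1⟩
      _ = _ := by ring
  have h := norm_integral_sub_integral_le hT.le
    ((by fun_prop : Measurable fun s : ℝ ↦ s ^ a).aestronglyMeasurable.mul
      hgT.1.aestronglyMeasurable) (hgT.const_mul _) (hdslope.const_mul _) hbound
  simp only [Pi.mul_apply] at h
  rw [intervalIntegral.integral_const_mul, integral_comp_sub_left, sub_self, sub_zero,
    intervalIntegral.integral_const_mul, integral_comp_div (fun x ↦ |dslope (· ^ a) 1 x|) hT.ne',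
    zero_div, div_self hT.ne', Real.norm_eq_abs, smul_eq_mul] at h
  exact h.trans_eq (by field_simp)

theorem isEquivalent_integral_rpow_mul_comp_sub (ha : -1 < a)
    (hg : ∀ T, IntervalIntegrable g volume 0 T) (hB : ∀ y, 0 ≤ y → |y * g y| ≤ B)
    (hlim : Tendsto (fun T ↦ ∫ y in 0..T, g y) atTop atTop) :
    (fun T ↦ ∫ s in 0..T, s ^ a * g (T - s)) ~[atTop] fun T ↦ T ^ a * ∫ y in 0..T, g y := by
  have hbigO : (fun T ↦ (∫ s in 0..T, s ^ a * g (T - s)) - T ^ a * ∫ y in 0..T, g y)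
      =O[atTop] fun T : ℝ ↦ T ^ a * 1 := by
    refine .of_bound (B * ∫ x in 0..1, |dslope (· ^ a) 1 x|) ?_
    filter_upwards [eventually_gt_atTop 0] with T hT
    rw [mul_one, Real.norm_of_nonneg (Real.rpow_nonneg hT.le a)]
    exact abs_integral_rpow_mul_comp_sub_sub_le ha hT (hg T) fun y hy ↦ hB y hy.1
  exact hbigO.trans_isLittleO ((isBigO_refl _ _).mul_isLittleO
    (isLittleO_const_left.2 (.inr (tendsto_norm_atTop_atTop.comp hlim))))

end PowerConvolution

section SqrtIncrement

/-- The function `y ↦ ∫ v in max 0 (y - 1)..y, v ^ (-1/2)`, in closed form: the kernel of the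
increments for `β = 0` and `γ = -1/2`, as a function of `y = t + 1 - s`. For `y < 1` the subtracted
term vanishes because `Real.sqrt` does on negative numbers. -/
noncomputable def sqrtIncrement (y : ℝ) : ℝ := 2 * (√y - √(y - 1))

lemma continuous_sqrtIncrement_sq : Continuous fun y ↦ sqrtIncrement y ^ 2 := by
  unfold sqrtIncrement
  fun_prop

lemma abs_self_mul_sqrtIncrement_sq_le {y : ℝ} (hy : 0 ≤ y) : |y * sqrtIncrement y ^ 2| ≤ 4 := by
  have hle : √(y - 1) ≤ √y := Real.sqrt_le_sqrt (by linarith)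
  have hprod : √y * (√y - √(y - 1)) ≤ 1 := by
    rcases le_total y 1 with h | h
    · rw [Real.sqrt_eq_zero_of_nonpos (sub_nonpos.2 h), sub_zero, Real.mul_self_sqrt hy]
      exact h
    · linarith [Real.mul_self_sqrt hy, Real.mul_self_sqrt (sub_nonneg.2 h),
        mul_le_mul_of_nonneg_right hle (Real.sqrt_nonneg (y - 1))]
  have hprod0 : 0 ≤ √y * (√y - √(y - 1)) := mul_nonneg (Real.sqrt_nonneg y) (sub_nonneg.2 hle)
  calc |y * sqrtIncrement y ^ 2| = y * sqrtIncrement y ^ 2 := abs_of_nonneg (by positivity)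
    _ = 4 * (√y * (√y - √(y - 1))) ^ 2 := by
      rw [sqrtIncrement, mul_pow √y, Real.sq_sqrt hy]
      ring
    _ ≤ 4 := by linarith [pow_le_one₀ hprod0 hprod (n := 2)]

lemma sqrtIncrement_eq_two_div {y : ℝ} (hy : 1 ≤ y) :
    sqrtIncrement y = 2 / (√y + √(y - 1)) := by
  have hpos : 0 < √y + √(y - 1) :=
    add_pos_of_pos_of_nonneg (Real.sqrt_pos.2 (by linarith)) (Real.sqrt_nonneg _)
  rw [sqrtIncrement, eq_div_iff hpos.ne']
  linear_combination 2 * Real.mul_self_sqrt (zero_le_one.trans hy) -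
    2 * Real.mul_self_sqrt (sub_nonneg.2 hy)

lemma inv_le_sqrtIncrement_sq {y : ℝ} (hy : 1 ≤ y) : y⁻¹ ≤ sqrtIncrement y ^ 2 := by
  have : 0 < √y := Real.sqrt_pos.2 (by linarith)
  have hle : √(y - 1) ≤ √y := Real.sqrt_le_sqrt (by linarith)
  calc y⁻¹ = (2 / (√y + √y)) ^ 2 := by
        rw [← two_mul, div_mul_cancel_left₀ two_ne_zero, inv_pow, Real.sq_sqrt (by linarith)]
    _ ≤ (2 / (√y + √(y - 1))) ^ 2 := by gcongr
    _ = sqrtIncrement y ^ 2 := by rw [sqrtIncrement_eq_two_div hy]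

lemma sqrtIncrement_sq_le_inv {y : ℝ} (hy : 1 < y) : sqrtIncrement y ^ 2 ≤ (y - 1)⁻¹ := by
  have : 0 < √(y - 1) := Real.sqrt_pos.2 (by linarith)
  have hle : √(y - 1) ≤ √y := Real.sqrt_le_sqrt (by linarith)
  calc sqrtIncrement y ^ 2 = (2 / (√y + √(y - 1))) ^ 2 := by rw [sqrtIncrement_eq_two_div hy.le]
    _ ≤ (2 / (√(y - 1) + √(y - 1))) ^ 2 := by gcongr
    _ = (y - 1)⁻¹ := by
        rw [← two_mul, div_mul_cancel_left₀ two_ne_zero, inv_pow, Real.sq_sqrt (by linarith)]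

lemma abs_integral_sqrtIncrement_sq_sub_log_le {T : ℝ} (hT : 2 ≤ T) :
    |(∫ y in 2..T, sqrtIncrement y ^ 2) - Real.log (T / 2)| ≤ Real.log 2 := by
  have hinv : IntervalIntegrable (fun y : ℝ ↦ y⁻¹) volume 2 T := by
    refine intervalIntegrable_inv (fun y hy ↦ ?_) continuousOn_id
    rw [uIcc_of_le hT] at hy
    exact (two_pos.trans_le hy.1).ne'
  have hinv' : IntervalIntegrable (fun y : ℝ ↦ (y - 1)⁻¹) volume 2 T := by
    refine intervalIntegrable_inv (fun y hy ↦ ?_) (by fun_prop)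
    rw [uIcc_of_le hT] at hy
    linarith [hy.1]
  have h := norm_integral_sub_integral_le hT
    continuous_sqrtIncrement_sq.aestronglyMeasurable hinv (hinv'.sub hinv) fun y hy ↦ by
      rw [Real.norm_of_nonneg (sub_nonneg.2 (inv_le_sqrtIncrement_sq (by linarith [hy.1])))]
      exact sub_le_sub_right (sqrtIncrement_sq_le_inv (by linarith [hy.1])) _
  rw [integral_sub hinv' hinv, integral_comp_sub_right (fun y ↦ y⁻¹),
    integral_inv_of_pos two_pos (by linarith), integral_inv_of_pos (by norm_num) (by linarith),
    Real.norm_eq_abs] at h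
  refine h.trans ?_
  have hlog : Real.log (T - 1) ≤ Real.log T := Real.log_le_log (by linarith) (by linarith)
  rw [Real.log_div (by linarith) two_ne_zero]
  norm_num
  linarith

lemma isEquivalent_integral_sqrtIncrement_sq :
    (fun T ↦ ∫ y in 0..T, sqrtIncrement y ^ 2) ~[atTop] Real.log := by
  have hint : ∀ x y, IntervalIntegrable (fun y ↦ sqrtIncrement y ^ 2) volume x y :=
    continuous_sqrtIncrement_sq.intervalIntegrable
  have hbounded : (fun T ↦ (∫ y in 0..T, sqrtIncrement y ^ 2) - Real.log T)
      =O[atTop] fun _ ↦ (1 : ℝ) := by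
    refine .of_bound (|∫ y in 0..2, sqrtIncrement y ^ 2| + 2 * Real.log 2) ?_
    filter_upwards [eventually_ge_atTop 2] with T hT
    have h := abs_le.1 (abs_integral_sqrtIncrement_sq_sub_log_le hT)
    rw [Real.log_div (by linarith) two_ne_zero] at h
    rw [← integral_add_adjacent_intervals (hint 0 2) (hint 2 T), norm_one, mul_one,
      Real.norm_eq_abs, abs_le]
    have h0 := abs_le.1 (le_refl |∫ y in 0..2, sqrtIncrement y ^ 2|)
    have := Real.log_pos one_lt_two
    constructor <;> linarith
  exact hbounded.trans_isLittleO Real.isLittleO_const_log_atTop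

end SqrtIncrement

section IncrementVariance

variable {α β γ s t : ℝ}

/-- The kernel `s ↦ ∫_{max(s,t)}^{t+1} u^β (u-s)^γ du` of the increment `X_{t+1} - X_t` as a Wiener
integral, up to the factor `s^α`. -/
noncomputable def incrementKernel (β γ t s : ℝ) : ℝ :=
  ∫ u in (max s t)..(t + 1), u ^ β * (u - s) ^ γ

/-- The variance `E(X_{t+1} - X_t)²` of the increments of the Gaussian Volterra process. -/
noncomputable def incrementVariance (α β γ t : ℝ) : ℝ :=
  ∫ s in (0 : ℝ)..(t + 1), s ^ (2 * α) * incrementKernel β γ t s ^ 2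

lemma measurable_incrementKernel (β γ t : ℝ) : Measurable (incrementKernel β γ t) :=
  measurable_intervalIntegral (f := fun p ↦ p.2 ^ β * (p.2 - p.1) ^ γ) (by fun_prop) (by fun_prop)
    measurable_const

lemma incrementKernel_zero_left (hγ : -1 < γ) (t s : ℝ) :
    incrementKernel 0 γ t s =
      ((t + 1 - s) ^ (γ + 1) - (max s t - s) ^ (γ + 1)) / (γ + 1) := by
  simp only [incrementKernel, Real.rpow_zero, one_mul]
  rw [integral_comp_sub_right (fun u ↦ u ^ γ), integral_rpow (.inl hγ)]

lemma incrementKernel_zero_neg_half (t s : ℝ) :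
    incrementKernel 0 (-(1 / 2)) t s = sqrtIncrement (t + 1 - s) := by
  have hmax : √(max s t - s) = √(t + 1 - s - 1) := by
    rw [← max_sub_sub_right, sub_self, Real.sqrt_monotone.map_max, Real.sqrt_zero,
      max_eq_right (Real.sqrt_nonneg _), sub_right_comm, add_sub_cancel_right]
  rw [incrementKernel_zero_left (by norm_num), sqrtIncrement, ← hmax, Real.sqrt_eq_rpow,
    Real.sqrt_eq_rpow]
  norm_num
  ring

lemma intervalIntegrable_incrementVariance_zero (hα : -(1 / 2) < α) (hγ : -1 < γ) (t x y : ℝ) :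
    IntervalIntegrable (fun s ↦ s ^ (2 * α) * incrementKernel 0 γ t s ^ 2) volume x y := by
  have hcont : Continuous (incrementKernel 0 γ t) := by
    simp only [funext (incrementKernel_zero_left hγ t)]
    have hγ' : 0 ≤ γ + 1 := by linarith
    exact (((by fun_prop : Continuous fun s ↦ t + 1 - s).rpow_const fun _ ↦ .inr hγ').sub
      ((by fun_prop : Continuous fun s ↦ max s t - s).rpow_const fun _ ↦ .inr hγ')).div_const _
  exact (intervalIntegrable_rpow' (by linarith)).mul_continuousOn (hcont.pow 2).continuousOn

lemma exists_incrementKernel_eq_rpow_mul (β : ℝ) (hγ : -1 < γ) (ht : 0 < t) (hs : s ≤ t + 1) :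
    ∃ ξ ∈ Icc t (t + 1), incrementKernel β γ t s = ξ ^ β * incrementKernel 0 γ t s := by
  have hle : max s t ≤ t + 1 := max_le hs (by linarith)
  have hsub : uIcc (max s t) (t + 1) ⊆ Icc t (t + 1) := by
    rw [uIcc_of_le hle]
    exact Icc_subset_Icc_left (le_max_right s t)
  have hcont : ContinuousOn (fun u : ℝ ↦ u ^ β) (uIcc (max s t) (t + 1)) :=
    continuousOn_id.rpow_const fun u hu ↦ .inl (ht.trans_le (hsub hu).1).ne'
  have hint : IntervalIntegrable (fun u ↦ (u - s) ^ γ) volume (max s t) (t + 1) := by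
    simpa using (intervalIntegrable_rpow' hγ (a := max s t - s) (b := t + 1 - s)).comp_sub_right s
  obtain ⟨ξ, hξ, h⟩ := exists_eq_const_mul_intervalIntegral_of_nonneg hcont hint fun u hu ↦ by
    rw [uIoc_of_le hle] at hu
    exact Real.rpow_nonneg (sub_nonneg.2 ((le_max_left s t).trans hu.1.le)) γ
  exact ⟨ξ, hsub hξ, by simpa [incrementKernel] using h⟩

lemma abs_incrementKernel_sq_sub_le (β : ℝ) (hγ : -1 < γ) (ht : 0 < t) (hs : s ≤ t + 1) :
    |incrementKernel β γ t s ^ 2 - t ^ (2 * β) * incrementKernel 0 γ t s ^ 2| ≤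
      (((t + 1) / t) ^ |2 * β| - 1) * t ^ (2 * β) * incrementKernel 0 γ t s ^ 2 := by
  obtain ⟨ξ, hξ, h⟩ := exists_incrementKernel_eq_rpow_mul β hγ ht hs
  have hsq : (ξ ^ β) ^ 2 = ξ ^ (2 * β) := by
    rw [mul_comm]
    exact_mod_cast (Real.rpow_mul_natCast (ht.le.trans hξ.1) β 2).symm
  rw [h, mul_pow, hsq, ← sub_mul, abs_mul, abs_sq]
  gcongr
  exact abs_rpow_sub_rpow_le ht hξ _

lemma abs_incrementVariance_sub_le (β : ℝ) (hα : -(1 / 2) < α) (hγ : -1 < γ) (ht : 0 < t) :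
    |incrementVariance α β γ t - t ^ (2 * β) * incrementVariance α 0 γ t| ≤
      (((t + 1) / t) ^ |2 * β| - 1) * (t ^ (2 * β) * incrementVariance α 0 γ t) := by
  have hint := intervalIntegrable_incrementVariance_zero hα hγ t 0 (t + 1)
  have hmeas : Measurable fun s ↦ s ^ (2 * α) * incrementKernel β γ t s ^ 2 :=
    (by fun_prop : Measurable fun s : ℝ ↦ s ^ (2 * α)).mul
      ((measurable_incrementKernel β γ t).pow_const 2)
  have h := norm_integral_sub_integral_le (by linarith) hmeas.aestronglyMeasurable
    (hint.const_mul (t ^ (2 * β)))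
    (hint.const_mul ((((t + 1) / t) ^ |2 * β| - 1) * t ^ (2 * β))) fun s hs ↦ by
      have hsα : 0 ≤ s ^ (2 * α) := Real.rpow_nonneg hs.1.le _
      rw [mul_left_comm, ← mul_sub, norm_mul, Real.norm_of_nonneg hsα, mul_left_comm]
      exact mul_le_mul_of_nonneg_left (abs_incrementKernel_sq_sub_le β hγ ht hs.2) hsα
  rw [intervalIntegral.integral_const_mul, intervalIntegral.integral_const_mul, mul_assoc] at h
  exact h

theorem isEquivalent_incrementVariance_rpow_mul (β : ℝ) (hα : -(1 / 2) < α) (hγ : -1 < γ) :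
    incrementVariance α β γ ~[atTop] fun t ↦ t ^ (2 * β) * incrementVariance α 0 γ t := by
  have hlim : Tendsto (fun t : ℝ ↦ ((t + 1) / t) ^ |2 * β| - 1) atTop (nhds 0) := by
    simpa using (tendsto_add_const_div_self_rpow 1 |2 * β|).sub_const 1
  have hbigO : (fun t ↦ incrementVariance α β γ t - t ^ (2 * β) * incrementVariance α 0 γ t)
      =O[atTop] fun t ↦
        (((t + 1) / t) ^ |2 * β| - 1) * (t ^ (2 * β) * incrementVariance α 0 γ t) := by
    refine .of_bound' ?_
    filter_upwards [eventually_gt_atTop 0] with t ht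
    exact (abs_incrementVariance_sub_le β hα hγ ht).trans (le_abs_self _)
  refine hbigO.trans_isLittleO ?_
  simpa only [one_mul] using ((isLittleO_one_iff ℝ).2 hlim).mul_isBigO (isBigO_refl _ _)

theorem isEquivalent_incrementVariance_zero_neg_half (hα : -(1 / 2) < α) :
    incrementVariance α 0 (-(1 / 2)) ~[atTop] fun t ↦ t ^ (2 * α) * Real.log t := by
  have hlog := isEquivalent_integral_sqrtIncrement_sq
  have hconv : (fun T ↦ ∫ s in 0..T, s ^ (2 * α) * sqrtIncrement (T - s) ^ 2) ~[atTop]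
      fun T ↦ T ^ (2 * α) * Real.log T :=
    (isEquivalent_integral_rpow_mul_comp_sub (by linarith)
      (continuous_sqrtIncrement_sq.intervalIntegrable 0)
      (fun _ ↦ abs_self_mul_sqrtIncrement_sq_le)
      (hlog.symm.tendsto_atTop Real.tendsto_log_atTop)).trans (IsEquivalent.refl.mul hlog)
  have hshift : (fun t : ℝ ↦ t + 1) ~[atTop] id :=
    IsEquivalent.refl.add_const_of_norm_tendsto_atTop tendsto_norm_atTop_atTop
  have hT : Tendsto (fun t : ℝ ↦ t + 1) atTop atTop := tendsto_atTop_add_const_right _ 1 tendsto_id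
  calc incrementVariance α 0 (-(1 / 2))
      = fun t ↦ ∫ s in 0..t + 1, s ^ (2 * α) * sqrtIncrement (t + 1 - s) ^ 2 := by
        funext t
        simp only [incrementVariance, incrementKernel_zero_neg_half]
    _ ~[atTop] fun t ↦ (t + 1) ^ (2 * α) * Real.log (t + 1) :=
        hconv.comp_tendsto hT
    _ ~[atTop] fun t ↦ t ^ (2 * α) * Real.log t :=
        (isEquivalent_add_const_rpow 1 _).mul (hshift.log tendsto_id)

end IncrementVariance

theorem stmt_5_general (α β : ℝ) (hα : -(1 / 2 : ℝ) < α) (V : ℝ → ℝ)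
    (hV : ∀ t : ℝ, V t = ∫ s in (0 : ℝ)..(t + 1), s ^ (2 * α) *
      (∫ u in (max s t)..(t + 1), u ^ β * (u - s) ^ (-(1 / 2 : ℝ))) ^ 2) :
    Tendsto (fun t : ℝ ↦ V t / (t ^ (2 * α + 2 * β) * Real.log t)) atTop (nhds 1) := by
  have hequiv : V ~[atTop] fun t ↦ t ^ (2 * α + 2 * β) * Real.log t :=
    calc V = incrementVariance α β (-(1 / 2)) := funext hV
      _ ~[atTop] fun t ↦ t ^ (2 * β) * incrementVariance α 0 (-(1 / 2)) t :=
        isEquivalent_incrementVariance_rpow_mul β hα (by norm_num)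
      _ ~[atTop] fun t ↦ t ^ (2 * β) * (t ^ (2 * α) * Real.log t) :=
        IsEquivalent.refl.mul (isEquivalent_incrementVariance_zero_neg_half hα)
      _ =ᶠ[atTop] fun t ↦ t ^ (2 * α + 2 * β) * Real.log t := by
        filter_upwards [eventually_gt_atTop 0] with t ht
        rw [Real.rpow_add ht]
        ring
  refine (isEquivalent_iff_tendsto_one ?_).1 hequiv
  filter_upwards [eventually_gt_atTop 1] with t ht
  exact (mul_pos (Real.rpow_pos_of_pos (by linarith) _) (Real.log_pos ht)).ne'

/-- Lemma 3.4, case `γ = -1/2`: asymptotics of the incremental variance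
`E(X_{t+1} - X_t)²` of the Gaussian Volterra process. -/
theorem stmt_5 (α β : ℝ) (hα : -(1/2 : ℝ) < α)
    (hαβγ : -(3/2 : ℝ) < α + β + (-(1/2 : ℝ)))
    (V : ℝ → ℝ)
    (hV : ∀ t : ℝ, V t = ∫ s in (0:ℝ)..(t+1), s ^ (2*α) *
      (∫ u in (max s t)..(t+1), u ^ β * (u - s) ^ (-(1/2 : ℝ))) ^ 2) :
    Tendsto (fun t : ℝ => V t / (t ^ (2*α+2*β) * Real.log t)) atTop (nhds 1) :=
  stmt_5_general α β hα V hV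
end

section
/- Let α, β, γ be real numbers with α > -1/2, γ > -1, α + β + γ > -3/2, and γ < −1/2. Define, for t ≥ 1, F(t) = ∫₀¹ s^{2α} (∫ₛ¹ u^β (u−s)^γ du) (∫ₜ^{t+1} v^β (v−s)^γ dv) ds, V(t) = ∫₀^{t+1} s^{2α} (∫_{max(s,t)}^{t+1} u^β (u−s)^γ du)² ds, C = ∫₀¹ s^{2α} (∫ₛ¹ u^β (u−s)^γ du)² ds, and r(t) = F(t) / (√C · √V(t)). Then there exists a constant c > 0 (depending on α, β, γ) such that lim_{t→+∞} t^{α−γ} r(t) = c. -/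
open MeasureTheory Filter intervalIntegral

/-!
Centre the time axis at `t`: with `s = t + x` and `u = t + y`, the increment `X_{t+1} - X_t` has the
kernel `t^(α+β) (1 + x/t)^α ∫ (1 + y/t)^β (y - x)^γ dy`, which after division by `t^(α+β)` converges
to the Mandelbrot–Van Ness kernel of fractional Brownian motion of Hurst index `γ + 3/2`. That
kernel decays like `|x|^γ` at `-∞`, so for `γ < -1/2` it is square integrable and the variance of
the increment is of exact order `t^(2(α+β))`. In the covariance with `X₁` the variable `s` stays in
`(0, 1)`, where the kernel of the increment is simply of order `t^(β+γ)`. The quotient is of order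
`t^(β+γ) / t^(α+β) = t^(γ-α)`.
-/

open Set
open scoped Interval Topology

section ParametricIntegral

variable {X E : Type*} [MeasurableSpace X] [NormedAddCommGroup E] [NormedSpace ℝ E]

theorem stronglyMeasurable_intervalIntegral_s7 {k : X → ℝ → E}
    (hk : StronglyMeasurable (Function.uncurry k)) {a b : X → ℝ} (ha : Measurable a)
    (hb : Measurable b) : StronglyMeasurable fun x ↦ ∫ u in (a x)..(b x), k x u := by
  have setIntegral_Ioc {a b : X → ℝ} (ha : Measurable a) (hb : Measurable b) :
      StronglyMeasurable fun x ↦ ∫ u in Ioc (a x) (b x), k x u := by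
    have hS : MeasurableSet {z : X × ℝ | z.2 ∈ Ioc (a z.1) (b z.1)} :=
      (measurableSet_lt (ha.comp measurable_fst) measurable_snd).inter
        (measurableSet_le measurable_snd (hb.comp measurable_fst))
    simp only [← MeasureTheory.integral_indicator measurableSet_Ioc]
    exact (hk.indicator hS).integral_prod_right' (ν := volume)
  exact (setIntegral_Ioc ha hb).sub (setIntegral_Ioc hb ha)

end ParametricIntegral

section RescaledPowers

variable {t x : ℝ}

theorem rpow_le_rpow_abs {c : ℝ} (hc : 0 < c) (hx : c⁻¹ ≤ x) (hxc : x ≤ c) (p : ℝ) :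
    x ^ p ≤ c ^ |p| := by
  have hx0 : 0 < x := (inv_pos.2 hc).trans_le hx
  rcases le_total 0 p with hp | hp
  · rw [abs_of_nonneg hp]
    exact Real.rpow_le_rpow hx0.le hxc hp
  · rw [abs_of_nonpos hp, Real.rpow_neg hc.le, ← Real.inv_rpow hc.le]
    exact Real.rpow_le_rpow_of_nonpos (inv_pos.2 hc) hx hp

theorem rpow_two_mul (hx : 0 ≤ x) (p : ℝ) : x ^ (2 * p) = (x ^ p) ^ 2 := by
  rw [mul_comm, ← Nat.cast_two, Real.rpow_mul_natCast hx]

theorem sqrt_div_rpow_two_mul (ht : 0 ≤ t) (v p : ℝ) : √(v / t ^ (2 * p)) = √v / t ^ p := by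
  rw [rpow_two_mul ht, Real.sqrt_div' v (sq_nonneg _), Real.sqrt_sq (Real.rpow_nonneg ht p)]

theorem mul_rpow_le_abs_mul_rpow {a b q : ℝ} (ha : 0 < a) (hab : a ≤ b) (hq : q ≤ 0) (D : ℝ) :
    D * b ^ q ≤ |D| * a ^ q :=
  mul_le_mul (le_abs_self D) (Real.rpow_le_rpow_of_nonpos ha hab hq)
    (Real.rpow_nonneg (ha.le.trans hab) q) (abs_nonneg D)

theorem one_add_div_nonneg (ht : 0 < t) (hx : -t ≤ x) : 0 ≤ 1 + x / t := by
  have : -1 ≤ x / t := by rwa [le_div_iff₀ ht, neg_one_mul]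
  linarith

theorem add_rpow_eq_rpow_mul (ht : 0 < t) (hx : -t ≤ x) (p : ℝ) :
    (t + x) ^ p = t ^ p * (1 + x / t) ^ p := by
  rw [← Real.mul_rpow ht.le (one_add_div_nonneg ht hx), mul_add, mul_one, mul_div_cancel₀ x ht.ne']

theorem norm_one_add_div_rpow_le (ht : 0 < t) (hx : |x| ≤ t / 2) (p : ℝ) :
    ‖(1 + x / t) ^ p‖ ≤ 2 ^ |p| := by
  obtain ⟨hx₁, hx₂⟩ := abs_le.1 hx
  have hlower : -(1 / 2) ≤ x / t := by rw [le_div_iff₀ ht]; linarith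
  have hupper : x / t ≤ 1 / 2 := by rw [div_le_iff₀ ht]; linarith
  rw [Real.norm_of_nonneg (Real.rpow_nonneg (by linarith) _)]
  exact rpow_le_rpow_abs two_pos (by linarith) (by linarith) p

theorem tendsto_one_add_div_rpow (x p : ℝ) :
    Tendsto (fun t : ℝ ↦ (1 + x / t) ^ p) atTop (𝓝 1) := by
  have h : Tendsto (fun t : ℝ ↦ 1 + x / t) atTop (𝓝 1) := by
    simpa using (tendsto_const_nhds (x := (1 : ℝ))).add (tendsto_const_nhds.div_atTop tendsto_id)
  simpa using h.rpow_const (Or.inl one_ne_zero)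

theorem intervalIntegrable_sub_rpow {γ : ℝ} (hγ : -1 < γ) (x a b : ℝ) :
    IntervalIntegrable (fun y : ℝ ↦ (y - x) ^ γ) volume a b := by
  simpa using (intervalIntegrable_rpow' (a := a - x) (b := b - x) hγ).comp_sub_right x

theorem integral_sub_rpow {γ : ℝ} (hγ : -1 < γ) (x a b : ℝ) :
    ∫ y in a..b, (y - x) ^ γ = ((b - x) ^ (γ + 1) - (a - x) ^ (γ + 1)) / (γ + 1) := by
  rw [intervalIntegral.integral_comp_sub_right (fun y ↦ y ^ γ), integral_rpow (Or.inl hγ)]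

theorem intervalIntegrable_one_add_div_rpow {p : ℝ} (hp : -1 < p) (ht : t ≠ 0) (a b : ℝ) :
    IntervalIntegrable (fun x : ℝ ↦ (1 + x / t) ^ p) volume a b := by
  have h := ((intervalIntegrable_rpow' (a := 1 + a / t) (b := 1 + b / t) hp).comp_add_left
    1).comp_mul_right (c := t⁻¹)
  simpa [← div_eq_mul_inv, ht] using h

theorem integrableOn_Iic_sub_rpow {q b c : ℝ} (hq : q < -1) (hbc : b < c) :
    IntegrableOn (fun x : ℝ ↦ (c - x) ^ q) (Iic b) := by
  have h := (Measure.measurePreserving_sub_left volume c).integrableOn_comp_preimage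
    (Homeomorph.subLeft c).measurableEmbedding (f := fun x : ℝ ↦ x ^ q) (s := Ici (c - b))
  simp only [preimage_const_sub_Ici, sub_sub_cancel] at h
  exact h.2 ((integrableOn_Ici_iff_integrableOn_Ioi (by simp)).2
    (integrableOn_Ioi_rpow_of_lt hq (sub_pos.2 hbc)))

end RescaledPowers

section RescaledWeight

variable {E : Type*} [NormedAddCommGroup E] [NormedSpace ℝ E]
  {f : ℝ → ℝ → E} {g : ℝ → E} {p q b c D : ℝ}

theorem intervalIntegrable_one_add_div_rpow_smul {t a : ℝ} {h : ℝ → E} (hp : -1 < p) (ht : t ≠ 0)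
    (hq : q ≤ 0) (hbc : b < c) (hm : AEStronglyMeasurable h (volume.restrict (Iic b)))
    (hD : ∀ x ≤ b, ‖h x‖ ≤ D * (c - x) ^ q) (hab : a ≤ b) :
    IntervalIntegrable (fun x ↦ (1 + x / t) ^ p • h x) volume a b := by
  have hw := (intervalIntegrable_iff_integrableOn_Ioc_of_le hab).1
    (intervalIntegrable_one_add_div_rpow hp ht a b)
  rw [intervalIntegrable_iff_integrableOn_Ioc_of_le hab]
  refine hw.smul_bdd (|D| * (c - b) ^ q) (hm.mono_set Ioc_subset_Iic_self) ?_
  exact (ae_restrict_iff' measurableSet_Ioc).2 (ae_of_all _ fun x hx ↦ (hD x hx.2).trans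
    (mul_rpow_le_abs_mul_rpow (sub_pos.2 hbc) (sub_le_sub_left hx.2 c) hq D))

theorem integral_one_add_div_rpow {t : ℝ} (ht : 0 < t) (p : ℝ) :
    ∫ x in (-t)..(-t / 2), (1 + x / t) ^ p = t * ∫ w in (0 : ℝ)..(1 / 2), w ^ p := by
  have h₀ : 1 + -t / t = 0 := by field_simp; ring
  have h₁ : 1 + -t / 2 / t = 1 / 2 := by field_simp; ring
  rw [intervalIntegral.integral_comp_add_div (fun w ↦ w ^ p) ht.ne' 1, h₀, h₁, smul_eq_mul]

theorem tendsto_integral_one_add_div_rpow_smul_far (hp : -1 < p) (hq : q < -1) (hc : 0 ≤ c)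
    (hD : ∀ᶠ t in atTop, ∀ x ≤ -t / 2, ‖f t x‖ ≤ D * (c - x) ^ q) :
    Tendsto (fun t ↦ ∫ x in (-t)..(-t / 2), (1 + x / t) ^ p • f t x) atTop (𝓝 0) := by
  have hlim : Tendsto (fun t : ℝ ↦
      (∫ w in (0 : ℝ)..(1 / 2), w ^ p) * (|D| * (1 / 2) ^ q) * t ^ (-(-1 - q))) atTop (𝓝 0) := by
    simpa using (tendsto_rpow_neg_atTop (y := -1 - q) (by linarith)).const_mul _
  refine squeeze_zero_norm' ?_ hlim
  filter_upwards [eventually_gt_atTop 0, hD] with t ht hDt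
  have bound : ∀ x ∈ Ioc (-t) (-t / 2),
      ‖(1 + x / t) ^ p • f t x‖ ≤ (1 + x / t) ^ p * (|D| * (t * (1 / 2)) ^ q) := fun x hx ↦ by
    have hcx : t * (1 / 2) ≤ c - x := by linarith [hx.2]
    rw [norm_smul, Real.norm_of_nonneg (Real.rpow_nonneg (one_add_div_nonneg ht hx.1.le) _)]
    refine mul_le_mul_of_nonneg_left ?_ (Real.rpow_nonneg (one_add_div_nonneg ht hx.1.le) _)
    exact (hDt x hx.2).trans (mul_rpow_le_abs_mul_rpow (by positivity) hcx (by linarith) D)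
  calc ‖∫ x in (-t)..(-t / 2), (1 + x / t) ^ p • f t x‖
      ≤ ∫ x in (-t)..(-t / 2), (1 + x / t) ^ p * (|D| * (t * (1 / 2)) ^ q) :=
        intervalIntegral.norm_integral_le_of_norm_le (by linarith) (ae_of_all _ bound)
          ((intervalIntegrable_one_add_div_rpow hp ht.ne' _ _).mul_const _)
    _ = (∫ w in (0 : ℝ)..(1 / 2), w ^ p) * (|D| * (1 / 2) ^ q) * t ^ (-(-1 - q)) := by
        rw [intervalIntegral.integral_mul_const, integral_one_add_div_rpow ht,
          Real.mul_rpow ht.le (by norm_num), neg_sub, sub_neg_eq_add, Real.rpow_add ht,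
          Real.rpow_one]
        ring

theorem tendsto_integral_one_add_div_rpow_smul_near (p : ℝ) (hq : q < -1) (hbc : b < c)
    (hm : ∀ᶠ t in atTop, AEStronglyMeasurable (f t) (volume.restrict (Iic b)))
    (hD : ∀ᶠ t in atTop, ∀ x ≤ b, ‖f t x‖ ≤ D * (c - x) ^ q)
    (hlim : ∀ x ≤ b, Tendsto (f · x) atTop (𝓝 (g x))) :
    Tendsto (fun t ↦ ∫ x in (-t / 2)..b, (1 + x / t) ^ p • f t x) atTop
      (𝓝 (∫ x in Iic b, g x)) := by
  have hind : Tendsto (fun t : ℝ ↦ ∫ x in Iic b,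
      (Ioi (-t / 2)).indicator (fun x ↦ (1 + x / t) ^ p • f t x) x) atTop
      (𝓝 (∫ x in Iic b, g x)) := by
    refine tendsto_integral_filter_of_dominated_convergence
      (fun x ↦ 2 ^ |p| * (D * (c - x) ^ q)) (hm.mono fun t hmt ↦ ?_) ?_
      (((integrableOn_Iic_sub_rpow hq hbc).const_mul D).const_mul _) ?_
    · exact (AEStronglyMeasurable.smul (by fun_prop : Measurable _).aestronglyMeasurable
        hmt).indicator measurableSet_Ioi
    · filter_upwards [eventually_gt_atTop 0, eventually_ge_atTop (2 * b), hD] with t ht htb hDt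
      refine (ae_restrict_iff' measurableSet_Iic).2 (ae_of_all _ fun x (hx : x ≤ b) ↦ ?_)
      have hf : 0 ≤ D * (c - x) ^ q := (norm_nonneg _).trans (hDt x hx)
      by_cases hxt : -t / 2 < x
      · rw [indicator_of_mem (mem_Ioi.2 hxt), norm_smul]
        exact mul_le_mul (norm_one_add_div_rpow_le ht (abs_le.2 ⟨by linarith, by linarith⟩) p)
          (hDt x hx) (norm_nonneg _) (by positivity)
      · rw [indicator_of_notMem (notMem_Ioi.2 (not_lt.1 hxt)), norm_zero]
        positivity
    · refine (ae_restrict_iff' measurableSet_Iic).2 (ae_of_all _ fun x hx ↦ ?_)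
      have h := (tendsto_one_add_div_rpow x p).smul (hlim x hx)
      rw [one_smul] at h
      refine h.congr' ?_
      filter_upwards [eventually_gt_atTop (-2 * x)] with t ht
      rw [indicator_of_mem (by simp only [mem_Ioi]; linarith)]
  refine hind.congr' ?_
  filter_upwards [eventually_ge_atTop (-2 * b)] with t ht
  rw [setIntegral_indicator measurableSet_Ioi, intervalIntegral.integral_of_le (by linarith),
    inter_comm, Ioi_inter_Iic]

/-- The weight `(1 + x / t) ^ p` may be singular at the moving endpoint `x = -t`, so dominated
convergence applies only on `(-t / 2, b)`; on the rest the decay of `f` beats the scale `t`. -/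
theorem tendsto_integral_one_add_div_rpow_smul (hp : -1 < p) (hq : q < -1) (hc : 0 ≤ c)
    (hbc : b < c) (hm : ∀ᶠ t in atTop, AEStronglyMeasurable (f t) (volume.restrict (Iic b)))
    (hD : ∀ᶠ t in atTop, ∀ x ≤ b, ‖f t x‖ ≤ D * (c - x) ^ q)
    (hlim : ∀ x ≤ b, Tendsto (f · x) atTop (𝓝 (g x))) :
    Tendsto (fun t ↦ ∫ x in (-t)..b, (1 + x / t) ^ p • f t x) atTop (𝓝 (∫ x in Iic b, g x)) := by
  have hD' : ∀ᶠ t in atTop, ∀ x ≤ -t / 2, ‖f t x‖ ≤ D * (c - x) ^ q := by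
    filter_upwards [hD, eventually_ge_atTop (-2 * b)] with t ht htb x hx
    exact ht x (by linarith)
  rw [← zero_add (∫ x in Iic b, g x)]
  refine ((tendsto_integral_one_add_div_rpow_smul_far hp hq hc hD').add
    (tendsto_integral_one_add_div_rpow_smul_near p hq hbc hm hD hlim)).congr' ?_
  filter_upwards [hm, hD, eventually_gt_atTop 0, eventually_ge_atTop (-2 * b)]
    with t hmt hDt ht htb
  have hint := intervalIntegrable_one_add_div_rpow_smul hp ht.ne' (by linarith : q ≤ 0) hbc hmt
    hDt (by linarith : -t ≤ b)
  refine integral_add_adjacent_intervals (hint.mono_set ?_) (hint.mono_set ?_)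
  all_goals
    rw [uIcc_of_le (by linarith), uIcc_of_le (by linarith)]
    exact Icc_subset_Icc (by linarith) (by linarith)

end RescaledWeight

/-- The integral `∫ₐᵇ u^β (u - s)^γ du`. For `s ≤ a ≤ b`, multiplying it by `s^α` gives the
coefficient of `dW_s` in the increment `X_b - X_a` of the Volterra process. -/
noncomputable def volterraIntegral (β γ s a b : ℝ) : ℝ :=
  ∫ u in a..b, u ^ β * (u - s) ^ γ

/-- The kernel of the increment `X_{t+1} - X_t` at the time `s = t + x`, with the factor
`s^α t^β` removed; see `volterraIntegral_eq_rpow_mul_rescaledKernel`. -/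
noncomputable def rescaledKernel (β γ t x : ℝ) : ℝ :=
  ∫ y in (max x 0)..1, (1 + y / t) ^ β * (y - x) ^ γ

/-- The Mandelbrot–Van Ness kernel of the unit increment of fractional Brownian motion of Hurst
index `γ + 3/2`, up to the factor `γ + 1`: it equals `((1 - x)₊^(γ+1) - (-x)₊^(γ+1)) / (γ + 1)`
for `x ≤ 1`. -/
noncomputable def fractionalKernel (γ x : ℝ) : ℝ :=
  ∫ y in (max x 0)..1, (y - x) ^ γ

section InitialTime

variable {β γ s : ℝ}

theorem intervalIntegrable_rpow_mul_sub_rpow (β : ℝ) (hγ : -1 < γ) {a b : ℝ} (ha : 0 < a)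
    (hb : 0 < b) (s : ℝ) :
    IntervalIntegrable (fun u : ℝ ↦ u ^ β * (u - s) ^ γ) volume a b :=
  (intervalIntegrable_sub_rpow hγ s a b).continuousOn_mul fun u hu ↦
    (Real.continuousAt_rpow_const u β
      (Or.inl ((lt_min ha hb).trans_le hu.1).ne')).continuousWithinAt

theorem volterraIntegral_pos (β : ℝ) (hγ : -1 < γ) {a b : ℝ} (ha : 0 < a) (hsa : s ≤ a)
    (hab : a < b) : 0 < volterraIntegral β γ s a b := by
  refine intervalIntegral_pos_of_pos_on
    (intervalIntegrable_rpow_mul_sub_rpow β hγ ha (ha.trans hab) s) (fun u hu ↦ ?_) hab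
  exact mul_pos (Real.rpow_pos_of_pos (ha.trans hu.1) β)
    (Real.rpow_pos_of_pos (sub_pos.2 (hsa.trans_lt hu.1)) γ)

theorem measurable_volterraIntegral (β γ : ℝ) {a b : ℝ → ℝ} (ha : Measurable a)
    (hb : Measurable b) : Measurable fun s ↦ volterraIntegral β γ s (a s) (b s) :=
  (stronglyMeasurable_intervalIntegral_s7 (k := fun s u ↦ u ^ β * (u - s) ^ γ)
    (by unfold Function.uncurry; fun_prop : Measurable _).stronglyMeasurable ha hb).measurable

/-- Of the exponent `β`, a part `-a` is charged to `s` and any remaining negative part to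
`u - s`. -/
theorem rpow_mul_sub_rpow_le {a u : ℝ} (ha : 0 ≤ a) (hs : 0 < s) (hsu : s < u) (hu : u ≤ 1) :
    u ^ β * (u - s) ^ γ ≤ s ^ (-a) * (u - s) ^ (min γ (a + β + γ)) := by
  have hu₀ : 0 < u := hs.trans hsu
  have hus : 0 < u - s := sub_pos.2 hsu
  calc u ^ β * (u - s) ^ γ = u ^ (-a) * (u ^ (a + β) * (u - s) ^ γ) := by
        rw [← mul_assoc, ← Real.rpow_add hu₀, neg_add_cancel_left]
    _ ≤ u ^ (-a) * (u - s) ^ (min γ (a + β + γ)) := by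
        gcongr
        rcases le_total 0 (a + β) with h | h
        · rw [min_eq_left (by linarith)]
          exact mul_le_of_le_one_left (by positivity) (Real.rpow_le_one hu₀.le hu h)
        · rw [min_eq_right (by linarith), Real.rpow_add hus]
          gcongr ?_ * _
          exact Real.rpow_le_rpow_of_nonpos hus (by linarith) h
    _ ≤ s ^ (-a) * (u - s) ^ (min γ (a + β + γ)) := by
        gcongr ?_ * _
        exact Real.rpow_le_rpow_of_nonpos hs hsu.le (by linarith)

theorem volterraIntegral_self_one_le {a : ℝ} (hγ : -1 < γ) (ha : 0 ≤ a) (haβγ : -1 < a + β + γ)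
    (hs : 0 < s) (hs1 : s ≤ 1) :
    volterraIntegral β γ s s 1 ≤ s ^ (-a) / (min γ (a + β + γ) + 1) := by
  set δ := min γ (a + β + γ)
  have hδ : -1 < δ := lt_min hγ haβγ
  have hδ1 : 0 < δ + 1 := by linarith
  calc volterraIntegral β γ s s 1 ≤ ∫ u in s..1, s ^ (-a) * (u - s) ^ δ :=
        integral_mono_on_of_le_Ioo hs1 (intervalIntegrable_rpow_mul_sub_rpow β hγ hs one_pos s)
          ((intervalIntegrable_sub_rpow hδ s s 1).const_mul _)
          fun u hu ↦ rpow_mul_sub_rpow_le ha hs hu.1 hu.2.le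
    _ = s ^ (-a) * ((1 - s) ^ (δ + 1) / (δ + 1)) := by
        rw [intervalIntegral.integral_const_mul, integral_sub_rpow hδ, sub_self,
          Real.zero_rpow hδ1.ne', sub_zero]
    _ ≤ s ^ (-a) * (1 / (δ + 1)) := by
        gcongr
        exact Real.rpow_le_one (by linarith) (by linarith) hδ1.le
    _ = s ^ (-a) / (δ + 1) := mul_one_div _ _

theorem intervalIntegrable_rpow_mul_volterraIntegral_pow {p : ℝ} {n : ℕ} (hγ : -1 < γ)
    (hp : -1 < p) (hn : -1 < p + n * (β + γ + 1)) :
    IntervalIntegrable (fun s ↦ s ^ p * volterraIntegral β γ s s 1 ^ n) volume 0 1 := by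
  obtain rfl | hn₀ := eq_or_ne n 0
  · simpa using intervalIntegrable_rpow' hp
  have hn_pos : (0 : ℝ) < n := by positivity
  obtain ⟨a, ha, hap⟩ : ∃ a, max 0 (-(β + γ + 1)) < a ∧ a < (p + 1) / n :=
    exists_between (max_lt (div_pos (by linarith) hn_pos)
      ((lt_div_iff₀ hn_pos).2 (by linarith)))
  obtain ⟨ha₀, haβγ⟩ := max_lt_iff.1 ha
  have hexp : -1 < p + -a * n := by linarith [(lt_div_iff₀ hn_pos).1 hap]
  have hm := measurable_volterraIntegral β γ measurable_id (measurable_const (a := (1 : ℝ)))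
  refine ((intervalIntegrable_rpow' hexp).mul_const
    ((min γ (a + β + γ) + 1)⁻¹ ^ n)).mono_fun (by fun_prop) ?_
  rw [uIoc_of_le zero_le_one]
  refine (ae_restrict_iff' measurableSet_Ioc).2 (ae_of_all _ fun s hs ↦ ?_)
  have hnonneg : 0 ≤ volterraIntegral β γ s s 1 := integral_nonneg hs.2 fun u hu ↦
    mul_nonneg (Real.rpow_nonneg (hs.1.le.trans hu.1) β)
      (Real.rpow_nonneg (sub_nonneg.2 hu.1) γ)
  have hle := volterraIntegral_self_one_le (β := β) hγ ha₀.le (by linarith) hs.1 hs.2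
  have hs_pow := Real.rpow_nonneg hs.1.le p
  refine (Real.norm_of_nonneg (by positivity)).trans_le (le_trans ?_ (Real.le_norm_self _))
  calc s ^ p * volterraIntegral β γ s s 1 ^ n
      ≤ s ^ p * (s ^ (-a) / (min γ (a + β + γ) + 1)) ^ n := by gcongr
    _ = s ^ (p + -a * n) * (min γ (a + β + γ) + 1)⁻¹ ^ n := by
        rw [Real.rpow_add hs.1, Real.rpow_mul_natCast hs.1.le, div_eq_mul_inv, mul_pow, mul_assoc]

theorem integral_rpow_mul_volterraIntegral_pow_pos {p : ℝ} {n : ℕ} (hγ : -1 < γ)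
    (hp : -1 < p) (hn : -1 < p + n * (β + γ + 1)) :
    0 < ∫ s in (0 : ℝ)..1, s ^ p * volterraIntegral β γ s s 1 ^ n :=
  intervalIntegral_pos_of_pos_on (intervalIntegrable_rpow_mul_volterraIntegral_pow hγ hp hn)
    (fun _ hs ↦ mul_pos (Real.rpow_pos_of_pos hs.1 p)
      (pow_pos (volterraIntegral_pos β hγ hs.1 le_rfl hs.2) n)) zero_lt_one

end InitialTime

section Rescaling

variable {β γ s t x : ℝ}

theorem volterraIntegral_add_eq_rpow_mul {a b : ℝ} (ht : 0 < t) (ha : -t ≤ a) (hab : a ≤ b) :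
    volterraIntegral β γ (t + x) (t + a) (t + b) =
      t ^ β * ∫ y in a..b, (1 + y / t) ^ β * (y - x) ^ γ := by
  rw [volterraIntegral, ← intervalIntegral.integral_comp_add_left,
    ← intervalIntegral.integral_const_mul]
  refine intervalIntegral.integral_congr fun y hy ↦ ?_
  rw [uIcc_of_le hab] at hy
  rw [add_sub_add_left_eq_sub, add_rpow_eq_rpow_mul ht (ha.trans hy.1), mul_assoc]

theorem volterraIntegral_eq_rpow_mul_rescaledKernel (ht : 0 < t) (hx : x ≤ 1) :
    volterraIntegral β γ (t + x) (max (t + x) t) (t + 1) = t ^ β * rescaledKernel β γ t x := by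
  have hmax : max (t + x) t = t + max x 0 := by rw [← max_add_add_left, add_zero]
  have hmax₀ : 0 ≤ max x 0 := le_max_right x 0
  rw [hmax, volterraIntegral_add_eq_rpow_mul ht (by linarith) (max_le hx zero_le_one),
    rescaledKernel]

theorem volterraIntegral_eq_rpow_mul_integral (ht : 0 < t) (hst : s ≤ t) :
    volterraIntegral β γ s t (t + 1) =
      t ^ (β + γ) * ∫ y in (0 : ℝ)..1, (1 + y / t) ^ β * (1 + (y - s) / t) ^ γ := by
  have h := volterraIntegral_add_eq_rpow_mul (β := β) (γ := γ) (x := s - t) ht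
    (by linarith) zero_le_one
  rw [add_sub_cancel, add_zero] at h
  rw [h, Real.rpow_add ht, mul_assoc, ← intervalIntegral.integral_const_mul (t ^ γ)]
  congr 1
  refine intervalIntegral.integral_congr fun y hy ↦ ?_
  rw [uIcc_of_le zero_le_one] at hy
  have hy_sub : y - (s - t) = t + (y - s) := by ring
  rw [hy_sub, add_rpow_eq_rpow_mul ht (by linarith [hy.1]), mul_left_comm]

end Rescaling

section Covariance

variable {β γ s t : ℝ}

theorem norm_one_add_div_rpow_mul_le (ht : 0 < t) (hs : |s| + 1 ≤ t / 2) {y : ℝ}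
    (hy : y ∈ Ι (0 : ℝ) 1) :
    ‖(1 + y / t) ^ β * (1 + (y - s) / t) ^ γ‖ ≤ 2 ^ |β| * 2 ^ |γ| := by
  rw [uIoc_of_le zero_le_one] at hy
  have hy_abs : |y| ≤ 1 := abs_le.2 ⟨by linarith [hy.1], hy.2⟩
  rw [norm_mul]
  exact mul_le_mul (norm_one_add_div_rpow_le ht (by linarith [abs_nonneg s]) β)
    (norm_one_add_div_rpow_le ht ((abs_sub y s).trans (by linarith)) γ) (norm_nonneg _)
    (by positivity)

theorem norm_volterraIntegral_div_rpow_le (hs : |s| + 1 ≤ t / 2) :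
    ‖volterraIntegral β γ s t (t + 1) / t ^ (β + γ)‖ ≤ 2 ^ |β| * 2 ^ |γ| := by
  have ht : 0 < t := by linarith [abs_nonneg s]
  rw [volterraIntegral_eq_rpow_mul_integral ht (by linarith [le_abs_self s]),
    mul_div_cancel_left₀ _ (Real.rpow_pos_of_pos ht _).ne']
  simpa using norm_integral_le_of_norm_le_const fun y hy ↦
    norm_one_add_div_rpow_mul_le (β := β) (γ := γ) ht hs hy

theorem tendsto_volterraIntegral_div_rpow (β γ s : ℝ) :
    Tendsto (fun t ↦ volterraIntegral β γ s t (t + 1) / t ^ (β + γ)) atTop (𝓝 1) := by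
  have h : Tendsto (fun t : ℝ ↦ ∫ y in (0 : ℝ)..1, (1 + y / t) ^ β * (1 + (y - s) / t) ^ γ) atTop
      (𝓝 (∫ _ in (0 : ℝ)..1, 1)) := by
    refine intervalIntegral.tendsto_integral_filter_of_dominated_convergence
      (fun _ ↦ 2 ^ |β| * 2 ^ |γ|) (.of_forall fun t ↦ by fun_prop) ?_ intervalIntegrable_const
      (ae_of_all _ fun y _ ↦ ?_)
    · filter_upwards [eventually_gt_atTop 0, eventually_ge_atTop (2 * (|s| + 1))] with t ht hts
      exact ae_of_all _ fun y hy ↦ norm_one_add_div_rpow_mul_le ht (by linarith) hy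
    · simpa using (tendsto_one_add_div_rpow y β).mul (tendsto_one_add_div_rpow (y - s) γ)
  rw [intervalIntegral.integral_const, sub_zero, one_smul] at h
  refine h.congr' ?_
  filter_upwards [eventually_gt_atTop 0, eventually_ge_atTop s] with t ht hst
  rw [volterraIntegral_eq_rpow_mul_integral ht hst,
    mul_div_cancel_left₀ _ (Real.rpow_pos_of_pos ht _).ne']

theorem tendsto_integral_mul_volterraIntegral_div_rpow (β γ : ℝ) {w : ℝ → ℝ} {a b : ℝ}
    (hw : IntervalIntegrable w volume a b) :
    Tendsto (fun t ↦ (∫ s in a..b, w s * volterraIntegral β γ s t (t + 1)) / t ^ (β + γ)) atTop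
      (𝓝 (∫ s in a..b, w s)) := by
  simp only [← intervalIntegral.integral_div, mul_div_assoc]
  refine intervalIntegral.tendsto_integral_filter_of_dominated_convergence
    (fun s ↦ ‖w s‖ * (2 ^ |β| * 2 ^ |γ|)) (.of_forall fun t ↦ ?_) ?_ (hw.norm.mul_const _)
    (ae_of_all _ fun s _ ↦ ?_)
  · have hm := measurable_volterraIntegral β γ (measurable_const (a := t))
      (measurable_const (a := t + 1))
    exact hw.def'.aestronglyMeasurable.mul (hm.div_const _).aestronglyMeasurable
  · filter_upwards [eventually_ge_atTop (2 * (|a| + |b - a| + 1))] with t ht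
    refine ae_of_all _ fun s hs ↦ ?_
    have hs_abs : |s| ≤ |a| + |b - a| := by
      linarith [abs_sub_abs_le_abs_sub s a, abs_sub_left_of_mem_uIcc (uIoc_subset_uIcc hs)]
    rw [norm_mul]
    gcongr
    exact norm_volterraIntegral_div_rpow_le (by linarith)
  · simpa using (tendsto_volterraIntegral_div_rpow β γ s).const_mul (w s)

end Covariance

section Variance

variable {β γ t x : ℝ}

theorem measurable_rescaledKernel (β γ t : ℝ) : Measurable (rescaledKernel β γ t) :=
  (stronglyMeasurable_intervalIntegral_s7 (k := fun x y ↦ (1 + y / t) ^ β * (y - x) ^ γ)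
    (by unfold Function.uncurry; fun_prop : Measurable _).stronglyMeasurable (by fun_prop)
    measurable_const).measurable

theorem rescaledKernel_zero (γ t : ℝ) : rescaledKernel 0 γ t = fractionalKernel γ := by
  funext x
  simp only [rescaledKernel, fractionalKernel, Real.rpow_zero, one_mul]

theorem measurable_fractionalKernel (γ : ℝ) : Measurable (fractionalKernel γ) :=
  rescaledKernel_zero γ 0 ▸ measurable_rescaledKernel 0 γ 0

theorem fractionalKernel_nonneg (γ : ℝ) (hx : x ≤ 1) : 0 ≤ fractionalKernel γ x :=
  integral_nonneg (max_le hx zero_le_one) fun _ hy ↦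
    Real.rpow_nonneg (sub_nonneg.2 ((le_max_left x 0).trans hy.1)) γ

theorem fractionalKernel_pos (hγ : -1 < γ) (hx : x < 1) : 0 < fractionalKernel γ x :=
  intervalIntegral_pos_of_pos_on (intervalIntegrable_sub_rpow hγ x _ _)
    (fun _ hy ↦ Real.rpow_pos_of_pos (sub_pos.2 ((le_max_left x 0).trans_lt hy.1)) γ)
    (max_lt hx zero_lt_one)

theorem fractionalKernel_le_neg_rpow (hγ : -1 < γ) (hγ₀ : γ ≤ 0) (hx : x < 0) :
    fractionalKernel γ x ≤ (-x) ^ γ := by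
  rw [fractionalKernel, max_eq_right hx.le]
  calc ∫ y in (0 : ℝ)..1, (y - x) ^ γ ≤ ∫ _ in (0 : ℝ)..1, (-x) ^ γ :=
        integral_mono_on zero_le_one (intervalIntegrable_sub_rpow hγ x 0 1)
          intervalIntegrable_const fun y hy ↦
            Real.rpow_le_rpow_of_nonpos (neg_pos.2 hx) (by linarith [hy.1]) hγ₀
    _ = (-x) ^ γ := by simp

theorem fractionalKernel_le_one_sub_rpow (hγ : -1 < γ) (x : ℝ) :
    fractionalKernel γ x ≤ (1 - x) ^ (γ + 1) / (γ + 1) := by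
  rw [fractionalKernel, integral_sub_rpow hγ]
  gcongr
  · linarith
  · exact sub_le_self _ (Real.rpow_nonneg (sub_nonneg.2 (le_max_left x 0)) _)

theorem exists_fractionalKernel_le (hγ : -1 < γ) (hγ₀ : γ ≤ 0) :
    ∃ D, ∀ x ≤ 1, fractionalKernel γ x ≤ D * (2 - x) ^ γ := by
  have hγ1 : 0 < γ + 1 := by linarith
  refine ⟨3 ^ (-γ) * max 1 (2 ^ (γ + 1) / (γ + 1)), fun x hx ↦ ?_⟩
  have hthird : 3 ^ (-γ) * (2 - x) ^ γ = ((2 - x) / 3) ^ γ := by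
    rw [Real.div_rpow (by linarith) (by norm_num), Real.rpow_neg (by norm_num), div_eq_inv_mul]
  have hthird₀ : 0 ≤ ((2 - x) / 3) ^ γ := Real.rpow_nonneg (by linarith) γ
  rw [mul_right_comm, hthird, mul_comm]
  rcases le_or_gt x (-1) with hfar | hnear
  · calc fractionalKernel γ x ≤ (-x) ^ γ := fractionalKernel_le_neg_rpow hγ hγ₀ (by linarith)
      _ ≤ ((2 - x) / 3) ^ γ :=
          Real.rpow_le_rpow_of_nonpos (by linarith) (by linarith) hγ₀
      _ ≤ max 1 (2 ^ (γ + 1) / (γ + 1)) * ((2 - x) / 3) ^ γ :=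
          le_mul_of_one_le_left hthird₀ (le_max_left _ _)
  · have hthird₁ : 1 ≤ ((2 - x) / 3) ^ γ :=
      Real.one_le_rpow_of_pos_of_le_one_of_nonpos (by linarith) (by linarith) hγ₀
    calc fractionalKernel γ x ≤ (1 - x) ^ (γ + 1) / (γ + 1) := fractionalKernel_le_one_sub_rpow hγ x
      _ ≤ 2 ^ (γ + 1) / (γ + 1) := by
          gcongr
          linarith
      _ ≤ max 1 (2 ^ (γ + 1) / (γ + 1)) := le_max_right _ _
      _ ≤ max 1 (2 ^ (γ + 1) / (γ + 1)) * ((2 - x) / 3) ^ γ :=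
          le_mul_of_one_le_right (by positivity) hthird₁

theorem norm_rescaledKernel_integrand_le (ht : 2 ≤ t) (hx : x ≤ 1) {y : ℝ}
    (hy : y ∈ Ι (max x 0) 1) :
    ‖(1 + y / t) ^ β * (y - x) ^ γ‖ ≤ 2 ^ |β| * (y - x) ^ γ := by
  rw [uIoc_of_le (max_le hx zero_le_one)] at hy
  obtain ⟨hxy, hy₀⟩ := max_lt_iff.1 hy.1
  rw [norm_mul, Real.norm_of_nonneg (Real.rpow_nonneg (sub_nonneg.2 hxy.le) γ)]
  gcongr
  exact norm_one_add_div_rpow_le (by linarith) (abs_le.2 ⟨by linarith, by linarith [hy.2]⟩) β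

theorem norm_rescaledKernel_le (β : ℝ) (hγ : -1 < γ) (ht : 2 ≤ t) (hx : x ≤ 1) :
    ‖rescaledKernel β γ t x‖ ≤ 2 ^ |β| * fractionalKernel γ x := by
  have hle := max_le hx zero_le_one
  rw [fractionalKernel, ← intervalIntegral.integral_const_mul]
  exact intervalIntegral.norm_integral_le_of_norm_le hle
    (ae_of_all _ fun y hy ↦ norm_rescaledKernel_integrand_le ht hx (by rwa [uIoc_of_le hle]))
    ((intervalIntegrable_sub_rpow hγ x _ _).const_mul _)

theorem tendsto_rescaledKernel (β : ℝ) (hγ : -1 < γ) (hx : x ≤ 1) :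
    Tendsto (rescaledKernel β γ · x) atTop (𝓝 (fractionalKernel γ x)) := by
  refine intervalIntegral.tendsto_integral_filter_of_dominated_convergence
    (fun y ↦ 2 ^ |β| * (y - x) ^ γ) (.of_forall fun t ↦ by fun_prop) ?_
    ((intervalIntegrable_sub_rpow hγ x _ _).const_mul _) (ae_of_all _ fun y _ ↦ ?_)
  · filter_upwards [eventually_ge_atTop 2] with t ht
    exact ae_of_all _ fun y hy ↦ norm_rescaledKernel_integrand_le ht hx hy
  · simpa using (tendsto_one_add_div_rpow y β).mul_const ((y - x) ^ γ)

theorem integral_rpow_mul_volterraIntegral_sq_eq (p β γ : ℝ) (ht : 0 < t) :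
    ∫ s in (0 : ℝ)..(t + 1), s ^ p * volterraIntegral β γ s (max s t) (t + 1) ^ 2 =
      t ^ (p + 2 * β) * ∫ x in (-t)..1, (1 + x / t) ^ p • rescaledKernel β γ t x ^ 2 := by
  have hshift := intervalIntegral.integral_comp_add_left (a := -t) (b := 1)
    (fun s ↦ s ^ p * volterraIntegral β γ s (max s t) (t + 1) ^ 2) t
  rw [add_neg_cancel] at hshift
  rw [← hshift, ← intervalIntegral.integral_const_mul]
  refine intervalIntegral.integral_congr fun x hx ↦ ?_
  rw [uIcc_of_le (by linarith)] at hx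
  rw [add_rpow_eq_rpow_mul ht hx.1, volterraIntegral_eq_rpow_mul_rescaledKernel ht hx.2,
    Real.rpow_add ht, rpow_two_mul ht.le, smul_eq_mul]
  ring

theorem exists_fractionalKernel_sq_le (hγ : -1 < γ) (hγ₀ : γ ≤ 0) :
    ∃ D, ∀ x ≤ 1, fractionalKernel γ x ^ 2 ≤ D * (2 - x) ^ (2 * γ) := by
  obtain ⟨D, hD⟩ := exists_fractionalKernel_le hγ hγ₀
  refine ⟨D ^ 2, fun x hx ↦ ?_⟩
  calc fractionalKernel γ x ^ 2 ≤ (D * (2 - x) ^ γ) ^ 2 :=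
        pow_le_pow_left₀ (fractionalKernel_nonneg γ hx) (hD x hx) 2
    _ = D ^ 2 * (2 - x) ^ (2 * γ) := by
        rw [mul_pow, rpow_two_mul (by linarith)]

theorem integrableOn_fractionalKernel_sq (hγ : -1 < γ) (hγ' : γ < -(1 / 2)) :
    IntegrableOn (fun x ↦ fractionalKernel γ x ^ 2) (Iic 1) := by
  obtain ⟨D, hD⟩ := exists_fractionalKernel_sq_le hγ (by linarith)
  refine ((integrableOn_Iic_sub_rpow (q := 2 * γ) (by linarith) one_lt_two).const_mul D).mono'
    ((measurable_fractionalKernel γ).pow_const 2).aestronglyMeasurable ?_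
  refine (ae_restrict_iff' measurableSet_Iic).2 (ae_of_all _ fun x hx ↦ ?_)
  exact (Real.norm_of_nonneg (sq_nonneg _)).trans_le (hD x hx)

theorem setIntegral_fractionalKernel_sq_pos (hγ : -1 < γ) (hγ' : γ < -(1 / 2)) :
    0 < ∫ x in Iic 1, fractionalKernel γ x ^ 2 := by
  rw [setIntegral_pos_iff_support_of_nonneg_ae (ae_of_all _ fun x ↦ sq_nonneg _)
    (integrableOn_fractionalKernel_sq hγ hγ')]
  have hsub : Iio 1 ⊆ (Function.support fun x ↦ fractionalKernel γ x ^ 2) ∩ Iic 1 := fun x hx ↦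
    ⟨(pow_pos (fractionalKernel_pos hγ hx) 2).ne', (mem_Iio.1 hx).le⟩
  exact (by simp : 0 < volume (Iio (1 : ℝ))).trans_le (measure_mono hsub)

theorem tendsto_integral_rpow_mul_volterraIntegral_sq_div_rpow {p : ℝ} (β : ℝ) (hp : -1 < p)
    (hγ : -1 < γ) (hγ' : γ < -(1 / 2)) :
    Tendsto (fun t ↦ (∫ s in (0 : ℝ)..(t + 1),
      s ^ p * volterraIntegral β γ s (max s t) (t + 1) ^ 2) / t ^ (p + 2 * β)) atTop
      (𝓝 (∫ x in Iic 1, fractionalKernel γ x ^ 2)) := by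
  obtain ⟨D, hD⟩ := exists_fractionalKernel_sq_le hγ (by linarith)
  have hbound : ∀ᶠ t in atTop, ∀ x ≤ 1,
      ‖rescaledKernel β γ t x ^ 2‖ ≤ (2 ^ |β|) ^ 2 * D * (2 - x) ^ (2 * γ) := by
    filter_upwards [eventually_ge_atTop 2] with t ht x hx
    calc ‖rescaledKernel β γ t x ^ 2‖ ≤ (2 ^ |β| * fractionalKernel γ x) ^ 2 := by
          rw [norm_pow]
          exact pow_le_pow_left₀ (norm_nonneg _) (norm_rescaledKernel_le β hγ ht hx) 2
      _ ≤ (2 ^ |β|) ^ 2 * (D * (2 - x) ^ (2 * γ)) := by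
          rw [mul_pow]
          exact mul_le_mul_of_nonneg_left (hD x hx) (sq_nonneg _)
      _ = (2 ^ |β|) ^ 2 * D * (2 - x) ^ (2 * γ) := (mul_assoc _ _ _).symm
  refine (tendsto_integral_one_add_div_rpow_smul hp (by linarith) zero_le_two one_lt_two
    (.of_forall fun t ↦ ((measurable_rescaledKernel β γ t).pow_const 2).aestronglyMeasurable)
    hbound fun x hx ↦ (tendsto_rescaledKernel β hγ hx).pow 2).congr' ?_
  filter_upwards [eventually_gt_atTop 0] with t ht
  rw [integral_rpow_mul_volterraIntegral_sq_eq p β γ ht,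
    mul_div_cancel_left₀ _ (Real.rpow_pos_of_pos ht _).ne']

end Variance

/-- Theorem 3.5, case `γ < -1/2`: asymptotics of the correlation
`corr(X₁, X_{t+1} - X_t)` of the Gaussian Volterra process. -/
theorem stmt_7 (α β γ : ℝ) (hα : -(1/2 : ℝ) < α) (hγ : -1 < γ)
    (hαβγ : -(3/2 : ℝ) < α + β + γ) (hγ' : γ < -(1/2 : ℝ))
    (F V r : ℝ → ℝ) (C : ℝ)
    (hF : ∀ t : ℝ, F t = ∫ s in (0:ℝ)..1, s ^ (2*α) *
      (∫ u in s..1, u ^ β * (u - s) ^ γ) *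
      (∫ v in t..(t+1), v ^ β * (v - s) ^ γ))
    (hV : ∀ t : ℝ, V t = ∫ s in (0:ℝ)..(t+1), s ^ (2*α) *
      (∫ u in (max s t)..(t+1), u ^ β * (u - s) ^ γ) ^ 2)
    (hC : C = ∫ s in (0:ℝ)..1, s ^ (2*α) *
      (∫ u in s..1, u ^ β * (u - s) ^ γ) ^ 2)
    (hr : ∀ t : ℝ, r t = F t / (Real.sqrt C * Real.sqrt (V t))) :
    ∃ c : ℝ, 0 < c ∧
      Tendsto (fun t : ℝ => t ^ (α - γ) * r t) atTop (nhds c) := by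
  have hα₂ : -1 < 2 * α := by linarith
  have hC_pos : 0 < C :=
    hC ▸ integral_rpow_mul_volterraIntegral_pow_pos hγ hα₂ (by push_cast; linarith)
  have hw : IntervalIntegrable (fun s ↦ s ^ (2 * α) * volterraIntegral β γ s s 1) volume 0 1 := by
    simpa using intervalIntegrable_rpow_mul_volterraIntegral_pow (n := 1) (β := β) hγ hα₂
      (by push_cast; linarith)
  have hw_pos : 0 < ∫ s in (0 : ℝ)..1, s ^ (2 * α) * volterraIntegral β γ s s 1 := by
    simpa using integral_rpow_mul_volterraIntegral_pow_pos (n := 1) (β := β) hγ hα₂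
      (by push_cast; linarith)
  have hK_pos := setIntegral_fractionalKernel_sq_pos hγ (by linarith)
  have hF_lim := tendsto_integral_mul_volterraIntegral_div_rpow β γ hw
  have hV_lim := tendsto_integral_rpow_mul_volterraIntegral_sq_div_rpow β hα₂ hγ (by linarith)
  simp only [volterraIntegral, ← hF, ← hV, ← mul_add] at hF_lim hV_lim
  refine ⟨_, div_pos hw_pos (mul_pos (Real.sqrt_pos.2 hC_pos) (Real.sqrt_pos.2 hK_pos)),
    (hF_lim.div (hV_lim.sqrt.const_mul √C) (by positivity)).congr' ?_⟩
  filter_upwards [eventually_gt_atTop 0] with t ht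
  have hpow : t ^ (α - γ) = t ^ (α + β) / t ^ (β + γ) := by
    rw [← Real.rpow_sub ht, add_comm α, add_sub_add_left_eq_sub]
  simp only [Pi.div_apply, hr, hpow, sqrt_div_rpow_two_mul ht.le, mul_div_assoc',
    div_div_eq_mul_div]
  ring
end
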